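/- arXiv:1106.4075 — 4 statements merged into one kernel-verified Lean document; each statement's English description precedes it below -/
import Mathlib

section
/- Let X be a set and let K, G be positive semidefinite kernels on X given by feature maps: K(x,y) = ⟨Φ₁(x), Φ₁(y)⟩_{W₁} and G(x,y) = ⟨Φ₂(x), Φ₂(y)⟩_{W₂}, where Φ₁ : X → W₁ and Φ₂ : X → W₂ map into complex Hilbert spaces W₁, W₂ and the linear spans of Φ₁(X) and Φ₂(X) are dense in W₁ and W₂ respectively. Then there exists a constant λ ≥ 0 such that λG − K is a positive semidefinite kernel on X if and only if there exists a bounded linear operator T : W₂ → W₁ such that T(Φ₂(x)) = Φ₁(x) for all x ∈ X. -/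
/-!
The quadratic form of a kernel `⟪Φ x, Φ y⟫` is the squared norm of a linear combination of the
vectors `Φ x`. Hence `λG - K` is positive semidefinite exactly when
`‖∑ x, l x • Φ₁ x‖ ≤ √λ * ‖∑ x, l x • Φ₂ x‖` for all finitely supported `l`, which is the condition
for `Φ₂ x ↦ Φ₁ x` to extend to a linear map of norm at most `√λ` on the closed span of `Φ₂`.
Composing with an orthogonal projection, after embedding the feature space in its completion,
makes this map everywhere defined.
-/

open scoped ComplexOrder

/-- A function `K : X × X → ℂ` is a positive semidefinite kernel if every finite
quadratic form `∑ j, ∑ k, c j * conj (c k) * K (x j) (x k)` is a nonnegative real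
number (here expressed via the partial order on `ℂ`). -/
def IsPSDKernel {X : Type*} (K : X → X → ℂ) : Prop :=
  ∀ (n : ℕ) (x : Fin n → X) (c : Fin n → ℂ),
    0 ≤ ∑ j, ∑ k, c j * (starRingEnd ℂ) (c k) * K (x j) (x k)

section Factorization

variable {𝕜 V E F : Type*} [RCLike 𝕜] [AddCommGroup V] [Module 𝕜 V]
  [SeminormedAddCommGroup E] [InnerProductSpace 𝕜 E]
  [NormedAddCommGroup F] [NormedSpace 𝕜 F] [CompleteSpace F]

theorem exists_continuousLinearMap_comp_eq_of_norm_le (f : V →ₗ[𝕜] F) (e : V →ₗ[𝕜] E) {C : ℝ}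
    (hC : 0 ≤ C) (hfe : ∀ v, ‖f v‖ ≤ C * ‖e v‖) :
    ∃ T : E →L[𝕜] F, ‖T‖ ≤ C ∧ ∀ v, T (e v) = f v := by
  let ι : E →ₗᵢ[𝕜] UniformSpace.Completion E := UniformSpace.Completion.toComplₗᵢ
  let S : Submodule 𝕜 (UniformSpace.Completion E) :=
    (LinearMap.range (ι.toLinearMap ∘ₗ e)).topologicalClosure
  let eS : V →ₗ[𝕜] S := (ι.toLinearMap ∘ₗ e).codRestrict S fun v =>
    Submodule.le_topologicalClosure _ (LinearMap.mem_range_self _ v)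
  have : CompleteSpace S := Submodule.topologicalClosure.completeSpace _
  have dense_eS : DenseRange eS := by
    intro y
    rw [closure_subtype, ← Set.range_comp]
    exact y.2
  have bound_eS : ∀ v, ‖f v‖ ≤ C * ‖eS v‖ := fun v =>
    (hfe v).trans_eq (congrArg (C * ·) (ι.norm_map (e v)).symm)
  refine ⟨f.extendOfNorm eS ∘L S.orthogonalProjectionOnto ∘L ι.toContinuousLinearMap,
    ContinuousLinearMap.opNorm_le_bound _ hC fun w => ?_, fun v => ?_⟩
  · calc ‖f.extendOfNorm eS (S.orthogonalProjectionOnto (ι w))‖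
        ≤ C * ‖S.orthogonalProjectionOnto (ι w)‖ :=
          LinearMap.norm_extendOfNorm_apply_le dense_eS C bound_eS _
      _ ≤ C * ‖ι w‖ := by gcongr; exact S.norm_orthogonalProjectionOnto_apply_le _
      _ = C * ‖w‖ := by rw [ι.norm_map]
  · calc f.extendOfNorm eS (S.orthogonalProjectionOnto (ι (e v)))
        = f.extendOfNorm eS (eS v) :=
          congrArg _ (S.orthogonalProjectionOnto_mem_subspace_eq_self (eS v))
      _ = f v := LinearMap.extendOfNorm_eq dense_eS ⟨C, bound_eS⟩ v

theorem forall_norm_le_mul_norm_iff_exists_continuousLinearMap (f : V →ₗ[𝕜] F) (e : V →ₗ[𝕜] E)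
    {C : ℝ} (hC : 0 ≤ C) :
    (∀ v, ‖f v‖ ≤ C * ‖e v‖) ↔ ∃ T : E →L[𝕜] F, ‖T‖ ≤ C ∧ ∀ v, T (e v) = f v := by
  refine ⟨exists_continuousLinearMap_comp_eq_of_norm_le f e hC, ?_⟩
  rintro ⟨T, hTC, hT⟩ v
  exact hT v ▸ T.le_of_opNorm_le hTC (e v)

end Factorization

theorem exists_eq_sum_fin_single {X M : Type*} [AddCommMonoid M] (l : X →₀ M) :
    ∃ (n : ℕ) (x : Fin n → X) (c : Fin n → M), l = ∑ j, Finsupp.single (x j) (c j) := by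
  let x : Fin l.support.card → X := fun j => l.support.equivFin.symm j
  refine ⟨_, x, l ∘ x, ?_⟩
  calc l = ∑ a ∈ l.support, Finsupp.single a (l a) := l.sum_single.symm
    _ = ∑ a : l.support, Finsupp.single (a : X) (l a) :=
        (Finset.sum_coe_sort l.support fun a => Finsupp.single a (l a)).symm
    _ = ∑ j, Finsupp.single (x j) (l (x j)) :=
        (l.support.equivFin.symm.sum_comp fun a => Finsupp.single (a : X) (l a)).symm

theorem sum_sum_mul_inner_eq_norm_sq {𝕜 W ι : Type*} [RCLike 𝕜] [SeminormedAddCommGroup W]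
    [InnerProductSpace 𝕜 W] [Fintype ι] (c : ι → 𝕜) (v : ι → W) :
    ∑ j, ∑ k, c j * (starRingEnd 𝕜) (c k) * inner 𝕜 (v j) (v k) =
      (‖∑ j, (starRingEnd 𝕜) (c j) • v j‖ : 𝕜) ^ 2 := by
  rw [← inner_self_eq_norm_sq_to_K, sum_inner]
  simp only [inner_sum, inner_smul_left, inner_smul_right, RCLike.conj_conj, mul_assoc,
    mul_left_comm]

section KernelDomination

variable {X W₁ W₂ : Type*} [SeminormedAddCommGroup W₂] [InnerProductSpace ℂ W₂]

theorem isPSDKernel_mul_inner_sub_inner_iff_norm_sq_le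
    [SeminormedAddCommGroup W₁] [InnerProductSpace ℂ W₁] (Φ₁ : X → W₁) (Φ₂ : X → W₂) (lam : ℝ) :
    IsPSDKernel (fun x y => (lam : ℂ) * inner ℂ (Φ₂ x) (Φ₂ y) - inner ℂ (Φ₁ x) (Φ₁ y)) ↔
      ∀ l : X →₀ ℂ, ‖Finsupp.linearCombination ℂ Φ₁ l‖ ^ 2 ≤
        lam * ‖Finsupp.linearCombination ℂ Φ₂ l‖ ^ 2 := by
  have quadratic_form_nonneg_iff (n : ℕ) (x : Fin n → X) (c : Fin n → ℂ) :
      0 ≤ ∑ j, ∑ k, c j * (starRingEnd ℂ) (c k) *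
          ((lam : ℂ) * inner ℂ (Φ₂ (x j)) (Φ₂ (x k)) - inner ℂ (Φ₁ (x j)) (Φ₁ (x k))) ↔
        ‖∑ j, (starRingEnd ℂ) (c j) • Φ₁ (x j)‖ ^ 2 ≤
          lam * ‖∑ j, (starRingEnd ℂ) (c j) • Φ₂ (x j)‖ ^ 2 := by
    simp only [mul_sub, mul_left_comm _ (lam : ℂ), Finset.sum_sub_distrib, ← Finset.mul_sum]
    rw [sum_sum_mul_inner_eq_norm_sq c fun j => Φ₁ (x j),
      sum_sum_mul_inner_eq_norm_sq c fun j => Φ₂ (x j), sub_nonneg,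
      RCLike.ofReal_eq_complex_ofReal]
    norm_cast
  constructor
  · intro hpsd l
    obtain ⟨n, x, c, rfl⟩ := exists_eq_sum_fin_single l
    have h := (quadratic_form_nonneg_iff n x fun j => (starRingEnd ℂ) (c j)).1 (hpsd n x _)
    simpa only [map_sum, Finsupp.linearCombination_single, RCLike.conj_conj] using h
  · intro hle n x c
    have h := hle (∑ j, Finsupp.single (x j) ((starRingEnd ℂ) (c j)))
    simp only [map_sum, Finsupp.linearCombination_single] at h
    exact (quadratic_form_nonneg_iff n x c).2 h

variable [NormedAddCommGroup W₁] [InnerProductSpace ℂ W₁] [CompleteSpace W₁]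

theorem isPSDKernel_mul_inner_sub_inner_iff_exists_norm_le (Φ₁ : X → W₁) (Φ₂ : X → W₂) {lam : ℝ}
    (hlam : 0 ≤ lam) :
    IsPSDKernel (fun x y => (lam : ℂ) * inner ℂ (Φ₂ x) (Φ₂ y) - inner ℂ (Φ₁ x) (Φ₁ y)) ↔
      ∃ T : W₂ →L[ℂ] W₁, ‖T‖ ≤ √lam ∧ ∀ x, T (Φ₂ x) = Φ₁ x := by
  have sq_le_iff {a b : ℝ} (ha : 0 ≤ a) (hb : 0 ≤ b) : a ^ 2 ≤ lam * b ^ 2 ↔ a ≤ √lam * b := by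
    rw [← sq_le_sq₀ ha (by positivity), mul_pow, Real.sq_sqrt hlam]
  have intertwines_iff (T : W₂ →L[ℂ] W₁) :
      (∀ l, T (Finsupp.linearCombination ℂ Φ₂ l) = Finsupp.linearCombination ℂ Φ₁ l) ↔
        ∀ x, T (Φ₂ x) = Φ₁ x := by
    refine ⟨fun h x => by simpa using h (Finsupp.single x 1), fun h l => ?_⟩
    simp only [Finsupp.linearCombination_apply, map_finsuppSum, map_smul, h]
  simp only [isPSDKernel_mul_inner_sub_inner_iff_norm_sq_le,
    sq_le_iff (norm_nonneg _) (norm_nonneg _),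
    forall_norm_le_mul_norm_iff_exists_continuousLinearMap _ _ (Real.sqrt_nonneg lam),
    intertwines_iff]

theorem inclusion_iff_boundedOperator_general (Φ₁ : X → W₁) (Φ₂ : X → W₂) (K G : X → X → ℂ)
    (hK : ∀ x y, K x y = inner ℂ (Φ₁ x) (Φ₁ y)) (hG : ∀ x y, G x y = inner ℂ (Φ₂ x) (Φ₂ y)) :
    (∃ lam : ℝ, 0 ≤ lam ∧ IsPSDKernel (fun x y => (lam : ℂ) * G x y - K x y)) ↔
      ∃ T : W₂ →L[ℂ] W₁, ∀ x, T (Φ₂ x) = Φ₁ x := by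
  simp only [hK, hG]
  constructor
  · rintro ⟨lam, hlam, hpsd⟩
    obtain ⟨T, -, hT⟩ := (isPSDKernel_mul_inner_sub_inner_iff_exists_norm_le Φ₁ Φ₂ hlam).1 hpsd
    exact ⟨T, hT⟩
  · rintro ⟨T, hT⟩
    refine ⟨‖T‖ ^ 2, sq_nonneg _, ?_⟩
    exact (isPSDKernel_mul_inner_sub_inner_iff_exists_norm_le Φ₁ Φ₂ (sq_nonneg _)).2
      ⟨T, (Real.sqrt_sq (norm_nonneg T)).ge, hT⟩

end KernelDomination

/-- Feature-map characterization of RKHS inclusion (kernel-domination form):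
given kernels `K`, `G` with feature maps `Φ₁ : X → W₁`, `Φ₂ : X → W₂` having dense
spans, there exists `λ ≥ 0` with `λG − K` positive semidefinite if and only if
there is a bounded linear operator `T : W₂ → W₁` with `T (Φ₂ x) = Φ₁ x` for all `x`. -/
theorem inclusion_iff_boundedOperator {X W₁ W₂ : Type*}
    [NormedAddCommGroup W₁] [InnerProductSpace ℂ W₁] [CompleteSpace W₁]
    [NormedAddCommGroup W₂] [InnerProductSpace ℂ W₂] [CompleteSpace W₂]
    (Φ₁ : X → W₁) (Φ₂ : X → W₂)
    (h₁ : Dense (Submodule.span ℂ (Set.range Φ₁) : Set W₁))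
    (h₂ : Dense (Submodule.span ℂ (Set.range Φ₂) : Set W₂))
    (K G : X → X → ℂ)
    (hK : ∀ x y, K x y = (inner ℂ (Φ₁ x) (Φ₁ y) : ℂ))
    (hG : ∀ x y, G x y = (inner ℂ (Φ₂ x) (Φ₂ y) : ℂ)) :
    (∃ lam : ℝ, 0 ≤ lam ∧
        IsPSDKernel (fun x y => (lam : ℂ) * G x y - K x y)) ↔
      (∃ T : W₂ →L[ℂ] W₁, ∀ x, T (Φ₂ x) = Φ₁ x) :=
  inclusion_iff_boundedOperator_general Φ₁ Φ₂ K G hK hG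
end

section
/- Let μ, ν be finite positive Borel measures on ℝ^d and let K, G be the continuous translation invariant kernels K(x,y) = ∫_{ℝ^d} e^{i⟨x−y,ξ⟩} dμ(ξ) and G(x,y) = ∫_{ℝ^d} e^{i⟨x−y,ξ⟩} dν(ξ) for x, y ∈ ℝ^d. Then there exists λ ≥ 0 such that λG − K is a positive semidefinite kernel if and only if μ is absolutely continuous with respect to ν and the Radon–Nikodym derivative dμ/dν is ν-essentially bounded; in that case, the infimum of all λ ≥ 0 such that λG − K is a positive semidefinite kernel equals the ν-essential supremum ‖dμ/dν‖_{L^∞_ν(ℝ^d)}. -/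
open MeasureTheory
open scoped ComplexOrder

/-!
A quadratic form of the kernel of `μ` is `∫ ‖g‖² ∂μ` for a trigonometric polynomial `g`, so
`λ G - K` is positive semidefinite iff `∫ ‖g‖² ∂μ ≤ ∫ ‖g‖² ∂(λ ν)` for all such `g`. Trigonometric
polynomials form a star subalgebra separating points, and such an algebra is dense in
`L²(μ + λ ν)`: a function orthogonal to it vanishes because the algebra determines finite measures,
applied to the positive and negative parts of its real and imaginary parts. Approximating indicator
functions turns the inequality into `μ ≤ λ ν`, that is, `μ ≪ ν` and `dμ/dν ≤ λ` almost everywhere.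
-/

open BoundedContinuousFunction
open scoped ENNReal ComplexConjugate

theorem measure_le_smul_iff_essSup_rnDeriv_le {X : Type*} [MeasurableSpace X] {μ ν : Measure X}
    [SigmaFinite ν] [μ.HaveLebesgueDecomposition ν] {c : ℝ≥0∞} :
    μ ≤ c • ν ↔ μ ≪ ν ∧ essSup (μ.rnDeriv ν) ν ≤ c := by
  constructor
  · refine fun h ↦ ⟨Measure.absolutelyContinuous_of_le_smul h, essSup_le_of_ae_le c ?_⟩
    refine ae_le_of_forall_setLIntegral_le_of_sigmaFinite (μ.measurable_rnDeriv ν) fun s _ _ ↦ ?_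
    rw [setLIntegral_const]
    exact (Measure.setLIntegral_rnDeriv_le s).trans (h s)
  · rintro ⟨hac, hc⟩
    rw [← Measure.withDensity_rnDeriv_eq μ ν hac, ← withDensity_const]
    exact withDensity_mono ((ENNReal.ae_le_essSup _).mono fun _ hx ↦ hx.trans hc)

lemma eLpNorm_two_le_eLpNorm_two_iff_integral_norm_sq_le {X E : Type*} [MeasurableSpace X]
    [NormedAddCommGroup E] {μ ν : Measure X} {f : X → E} (hμ : MemLp f 2 μ) (hν : MemLp f 2 ν) :
    eLpNorm f 2 μ ≤ eLpNorm f 2 ν ↔ ∫ x, ‖f x‖ ^ 2 ∂μ ≤ ∫ x, ‖f x‖ ^ 2 ∂ν := by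
  have eLpNorm_eq {ρ : Measure X} (hf : MemLp f 2 ρ) :
      eLpNorm f 2 ρ = ENNReal.ofReal (√(∫ x, ‖f x‖ ^ 2 ∂ρ)) := by
    rw [hf.eLpNorm_eq_integral_rpow_norm two_ne_zero ENNReal.ofNat_ne_top, Real.sqrt_eq_rpow]
    norm_num
  rw [eLpNorm_eq hμ, eLpNorm_eq hν, ENNReal.ofReal_le_ofReal_iff (Real.sqrt_nonneg _),
    Real.sqrt_le_sqrt_iff (integral_nonneg fun _ ↦ by positivity)]

lemma memLp_boundedContinuousFunction {X E : Type*} [TopologicalSpace X] [MeasurableSpace X]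
    [OpensMeasurableSpace X] [NormedAddCommGroup E] [SecondCountableTopologyEither X E]
    (g : X →ᵇ E) (p : ℝ≥0∞) (μ : Measure X) [IsFiniteMeasure μ] : MemLp g p μ :=
  .of_bound g.continuous.aestronglyMeasurable ‖g‖ (ae_of_all _ g.norm_coe_le_norm)

section SeparatingSubalgebra

variable {X 𝕜 : Type*} [RCLike 𝕜] [TopologicalSpace X] [PolishSpace X] [MeasurableSpace X]
  [BorelSpace X] {A : StarSubalgebra 𝕜 (X →ᵇ 𝕜)}

lemma ae_eq_zero_of_forall_mem_integral_mul_ofReal_eq_zero {P : Measure X}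
    (hA : (A.map (toContinuousMapStarₐ 𝕜)).SeparatesPoints) {u : X → ℝ} (hu : Integrable u P)
    (h : ∀ g ∈ A, ∫ x, g x * (u x : 𝕜) ∂P = 0) : u =ᵐ[P] 0 := by
  have isFinite {v : X → ℝ} (hv : Integrable v P) :
      IsFiniteMeasure (P.withDensity fun x ↦ (v x).toNNReal) :=
    isFiniteMeasure_withDensity hv.lintegral_lt_top.ne
  have integral_eq {v : X → ℝ} (hv : Integrable v P) (g : X →ᵇ 𝕜) :
      ∫ x, g x ∂P.withDensity (fun x ↦ (v x).toNNReal) = ∫ x, g x * ((max (v x) 0 : ℝ) : 𝕜) ∂P := by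
    rw [integral_withDensity_eq_integral_smul₀ hv.aemeasurable.real_toNNReal]
    simp only [NNReal.smul_def, Real.coe_toNNReal', RCLike.real_smul_eq_coe_mul, mul_comm]
  have integrable_mul {v : X → ℝ} (hv : Integrable v P) (g : X →ᵇ 𝕜) :
      Integrable (fun x ↦ g x * ((max (v x) 0 : ℝ) : 𝕜)) P :=
    hv.pos_part.ofReal.bdd_mul g.continuous.aestronglyMeasurable (ae_of_all _ g.norm_coe_le_norm)
  have := isFinite hu
  have := isFinite hu.neg
  have withDensity_eq : P.withDensity (fun x ↦ (u x).toNNReal)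
      = P.withDensity fun x ↦ ((-u) x).toNNReal := by
    refine ext_of_forall_mem_subalgebra_integral_eq_of_polish hA fun g hg ↦ ?_
    rw [integral_eq hu, integral_eq hu.neg, ← sub_eq_zero,
      ← integral_sub (integrable_mul hu g) (integrable_mul hu.neg g), ← h g hg]
    simp only [← mul_sub, ← RCLike.ofReal_sub, Pi.neg_apply, max_zero_sub_eq_self]
  filter_upwards [(withDensity_eq_iff hu.aemeasurable.ennreal_ofReal
    hu.neg.aemeasurable.ennreal_ofReal hu.lintegral_lt_top.ne).1 withDensity_eq] with x hx
  have pos_part_eq : max (u x) 0 = max (-u x) 0 := by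
    simpa only [Pi.neg_apply, ENNReal.ofReal, ENNReal.coe_inj, ← NNReal.coe_inj,
      Real.coe_toNNReal'] using hx
  rw [← max_zero_sub_eq_self (u x), pos_part_eq, sub_self, Pi.zero_apply]

theorem ae_eq_zero_of_forall_mem_subalgebra_integral_mul_eq_zero {P : Measure X}
    (hA : (A.map (toContinuousMapStarₐ 𝕜)).SeparatesPoints) {f : X → 𝕜}
    (hf : Integrable f P) (h : ∀ g ∈ A, ∫ x, g x * f x ∂P = 0) : f =ᵐ[P] 0 := by
  have re_eq_zero {f : X → 𝕜} (hf : Integrable f P) (h : ∀ g ∈ A, ∫ x, g x * f x ∂P = 0) :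
      (fun x ↦ RCLike.re (f x)) =ᵐ[P] 0 := by
    refine ae_eq_zero_of_forall_mem_integral_mul_ofReal_eq_zero hA hf.re fun g hg ↦ ?_
    have integrable_mul {f' : X → 𝕜} (hf' : Integrable f' P) : Integrable (fun x ↦ g x * f' x) P :=
      hf'.bdd_mul g.continuous.aestronglyMeasurable (ae_of_all _ g.norm_coe_le_norm)
    have integrable_conj : Integrable (fun x ↦ conj (f x)) P :=
      RCLike.conjLIE.integrable_comp_iff.2 hf
    have integral_conj_eq : ∫ x, g x * conj (f x) ∂P = 0 := by
      rw [← map_zero conj, ← h _ (star_mem hg), ← integral_conj]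
      simp
    simp_rw [RCLike.re_eq_add_conj, mul_div_assoc', mul_add]
    rw [integral_div, integral_add (integrable_mul hf) (integrable_mul integrable_conj), h g hg,
      integral_conj_eq, add_zero, zero_div]
  have im_eq_zero := re_eq_zero (hf.const_mul RCLike.I) fun g hg ↦ by
    simp_rw [mul_left_comm _ RCLike.I]
    rw [integral_const_mul, h g hg, mul_zero]
  filter_upwards [re_eq_zero hf h, im_eq_zero] with x hre him
  rw [RCLike.I_mul_re] at him
  exact RCLike.ext (by simpa using hre) (by simpa using him)

theorem dense_toLp_image_of_separatesPoints (P : Measure X) [IsFiniteMeasure P]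
    (hA : (A.map (toContinuousMapStarₐ 𝕜)).SeparatesPoints) :
    Dense (toLp 2 P 𝕜 '' (A : Set (X →ᵇ 𝕜))) := by
  let V : Submodule 𝕜 (Lp 𝕜 2 P) := A.toSubalgebra.toSubmodule.map (toLp 2 P 𝕜).toLinearMap
  suffices Vᗮ = ⊥ from
    Submodule.dense_iff_topologicalClosure_eq_top.2 (Submodule.topologicalClosure_eq_top_iff.2 this)
  refine (Submodule.eq_bot_iff _).2 fun f hf ↦ (Lp.eq_zero_iff_ae_eq_zero).2 ?_
  refine ae_eq_zero_of_forall_mem_subalgebra_integral_mul_eq_zero hA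
    ((Lp.memLp f).integrable one_le_two) fun g hg ↦ ?_
  have inner_eq_zero : inner 𝕜 (toLp 2 P 𝕜 (star g)) f = 0 :=
    hf _ ⟨star g, star_mem (s := A) hg, rfl⟩
  rw [← inner_eq_zero, L2.inner_def]
  refine integral_congr_ae ?_
  filter_upwards [coeFn_toLp 2 P 𝕜 (star g)] with x hx
  simp [hx, mul_comm]

lemma exists_mem_eLpNorm_sub_lt (P : Measure X) [IsFiniteMeasure P]
    (hA : (A.map (toContinuousMapStarₐ 𝕜)).SeparatesPoints) {f : X → 𝕜} (hf : MemLp f 2 P)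
    {ε : ℝ≥0∞} (hε : 0 < ε) : ∃ g ∈ A, eLpNorm (f - ⇑g) 2 P < ε := by
  obtain ⟨_, ⟨g, hg, rfl⟩, hfg⟩ :=
    EMetric.mem_closure_iff.1 (dense_toLp_image_of_separatesPoints P hA (hf.toLp f)) ε hε
  refine ⟨g, hg, ?_⟩
  rwa [Lp.edist_def, eLpNorm_congr_ae (hf.coeFn_toLp.sub (coeFn_toLp 2 P 𝕜 g))] at hfg

theorem eLpNorm_two_le_of_forall_mem_subalgebra {μ ν : Measure X} [IsFiniteMeasure μ]
    [IsFiniteMeasure ν] (hA : (A.map (toContinuousMapStarₐ 𝕜)).SeparatesPoints)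
    (h : ∀ g ∈ A, eLpNorm g 2 μ ≤ eLpNorm g 2 ν) {f : X → 𝕜} (hf : MemLp f 2 (μ + ν)) :
    eLpNorm f 2 μ ≤ eLpNorm f 2 ν := by
  refine ENNReal.le_of_forall_pos_le_add fun ε hε _ ↦ ?_
  obtain ⟨g, hgA, hg⟩ := exists_mem_eLpNorm_sub_lt (μ + ν) hA hf
    (ENNReal.half_pos (ENNReal.coe_ne_zero.2 hε.ne'))
  have hμ : μ ≤ μ + ν := Measure.le_add_right le_rfl
  have hν : ν ≤ μ + ν := Measure.le_add_left le_rfl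
  have hfg : AEStronglyMeasurable (f - ⇑g) (μ + ν) :=
    hf.aestronglyMeasurable.sub g.continuous.aestronglyMeasurable
  calc eLpNorm f 2 μ
    _ = eLpNorm ((f - ⇑g) + ⇑g) 2 μ := by rw [sub_add_cancel]
    _ ≤ eLpNorm (f - ⇑g) 2 μ + eLpNorm g 2 μ :=
      eLpNorm_add_le (hfg.mono_measure hμ) g.continuous.aestronglyMeasurable one_le_two
    _ ≤ eLpNorm (f - ⇑g) 2 μ + eLpNorm (f - (f - ⇑g)) 2 ν := by
      rw [sub_sub_cancel]
      exact add_le_add le_rfl (h g hgA)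
    _ ≤ eLpNorm (f - ⇑g) 2 μ + (eLpNorm f 2 ν + eLpNorm (f - ⇑g) 2 ν) := by
      gcongr
      exact eLpNorm_sub_le (hf.aestronglyMeasurable.mono_measure hν) (hfg.mono_measure hν)
        one_le_two
    _ ≤ ε / 2 + (eLpNorm f 2 ν + ε / 2) := by
      gcongr
      · exact (eLpNorm_mono_measure _ hμ).trans hg.le
      · exact (eLpNorm_mono_measure _ hν).trans hg.le
    _ = eLpNorm f 2 ν + ε := by rw [add_left_comm, ENNReal.add_halves]

theorem measure_le_iff_forall_mem_subalgebra_integral_norm_sq_le {μ ν : Measure X}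
    [IsFiniteMeasure μ] [IsFiniteMeasure ν]
    (hA : (A.map (toContinuousMapStarₐ 𝕜)).SeparatesPoints) :
    μ ≤ ν ↔ ∀ g ∈ A, ∫ x, ‖g x‖ ^ 2 ∂μ ≤ ∫ x, ‖g x‖ ^ 2 ∂ν := by
  simp_rw [← eLpNorm_two_le_eLpNorm_two_iff_integral_norm_sq_le
    (memLp_boundedContinuousFunction _ 2 μ) (memLp_boundedContinuousFunction _ 2 ν)]
  refine ⟨fun h g _ ↦ eLpNorm_mono_measure g h, fun h ↦ Measure.le_iff.2 fun s hs ↦ ?_⟩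
  have indicator_le := eLpNorm_two_le_of_forall_mem_subalgebra hA h
    (memLp_indicator_const 2 hs (1 : 𝕜) (.inr (measure_ne_top _ _)))
  simpa [eLpNorm_indicator_const hs, ENNReal.rpow_le_rpow_iff] using indicator_le

end SeparatingSubalgebra

lemma mem_charPoly_iff_exists_sum_smul_char {V W : Type*} [AddCommGroup V] [Module ℝ V]
    [TopologicalSpace V] [AddCommGroup W] [Module ℝ W] [TopologicalSpace W] {e : AddChar ℝ Circle}
    {L : V →ₗ[ℝ] W →ₗ[ℝ] ℝ} (he : Continuous e)
    (hL : Continuous fun p : V × W ↦ L p.1 p.2) {g : V →ᵇ ℂ} :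
    g ∈ charPoly he hL ↔
      ∃ (n : ℕ) (x : Fin n → W) (c : Fin n → ℂ), g = ∑ j, c j • char he hL (x j) := by
  constructor
  · rw [mem_charPoly]
    rintro ⟨w, hw⟩
    have mem_span : g ∈ Submodule.span ℂ (Set.range (char he hL)) := by
      have : g = ∑ a ∈ w.coeff.support, w.coeff a • char he hL a := by
        ext v
        simp [hw, Finsupp.sum]
      rw [this]
      exact Submodule.sum_mem _ fun a _ ↦
        Submodule.smul_mem _ _ (Submodule.subset_span ⟨a, rfl⟩)
    obtain ⟨n, c, χ, rfl⟩ := Submodule.mem_span_set'.1 mem_span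
    choose x hx using fun j ↦ (χ j).2
    exact ⟨n, x, c, by simp_rw [hx]⟩
  · rintro ⟨n, x, c, rfl⟩
    exact sum_mem fun j _ ↦ SMulMemClass.smul_mem (c j) (char_mem_charPoly (x j))

section FourierKernel

variable {V W : Type*} [AddCommGroup V] [Module ℝ V] [MeasurableSpace V]
  [AddCommGroup W] [Module ℝ W]

/-- The translation invariant kernel `(x, y) ↦ ∫ v, e (L v (x - y)) ∂μ` on `W`, that is, the
Fourier transform of the measure `μ` on `V` evaluated at `x - y`, where the pairing `L` of `V` with
`W` and the character `e` of `ℝ` play the role of the inner product and of `t ↦ exp (i t)`. -/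
noncomputable def fourierKernel (e : AddChar ℝ Circle) (L : V →ₗ[ℝ] W →ₗ[ℝ] ℝ) (μ : Measure V)
    (x y : W) : ℂ :=
  ∫ v, (e (L v (x - y)) : ℂ) ∂μ

lemma fourierKernel_smul_measure (e : AddChar ℝ Circle) (L : V →ₗ[ℝ] W →ₗ[ℝ] ℝ) (μ : Measure V)
    {r : ℝ} (hr : 0 ≤ r) (x y : W) :
    fourierKernel e L (ENNReal.ofReal r • μ) x y = r * fourierKernel e L μ x y := by
  rw [fourierKernel, integral_smul_measure, ENNReal.toReal_ofReal hr, Complex.real_smul,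
    fourierKernel]

variable [TopologicalSpace V] [BorelSpace V] [TopologicalSpace W] {e : AddChar ℝ Circle}
  {L : V →ₗ[ℝ] W →ₗ[ℝ] ℝ}

lemma sum_mul_fourierKernel_eq_integral_norm_sq (he : Continuous e)
    (hL : Continuous fun p : V × W ↦ L p.1 p.2) (μ : Measure V) [IsFiniteMeasure μ] {n : ℕ}
    (x : Fin n → W) (c : Fin n → ℂ) :
    ∑ j, ∑ k, c j * conj (c k) * fourierKernel e L μ (x j) (x k) =
      ((∫ v, ‖(∑ j, c j • char he hL (x j)) v‖ ^ 2 ∂μ : ℝ) : ℂ) := by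
  have norm_sq_eq (v : V) : ((‖(∑ j, c j • char he hL (x j)) v‖ ^ 2 : ℝ) : ℂ) =
      ∑ j, ∑ k, c j * conj (c k) * char he hL (x j - x k) v := by
    rw [Complex.ofReal_pow, ← Complex.mul_conj', BoundedContinuousFunction.sum_apply, map_sum,
      Finset.sum_mul_sum]
    refine Finset.sum_congr rfl fun j _ ↦ Finset.sum_congr rfl fun k _ ↦ ?_
    rw [sub_eq_add_neg, char_add_eq_mul, char_neg]
    simp only [coe_smul, smul_eq_mul, map_mul, mul_apply, star_apply, RCLike.star_def]
    ring
  have integrable_char (c : ℂ) (w : W) : Integrable (fun v ↦ c * char he hL w v) μ :=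
    ((char he hL w).integrable μ).const_mul c
  rw [← integral_complex_ofReal]
  simp_rw [norm_sq_eq]
  rw [integral_finsetSum _ fun j _ ↦ integrable_finsetSum _ fun k _ ↦ integrable_char _ _]
  refine Finset.sum_congr rfl fun j _ ↦ ?_
  rw [integral_finsetSum _ fun k _ ↦ integrable_char _ _]
  simp_rw [integral_const_mul, char_apply, fourierKernel]

variable [PolishSpace V] {μ ν : Measure V} [IsFiniteMeasure μ] [IsFiniteMeasure ν]

theorem isPSDKernel_fourierKernel_sub_iff_le (he : Continuous e) (he' : e ≠ 1)
    (hL : Continuous fun p : V × W ↦ L p.1 p.2) (hL' : ∀ v ≠ 0, L v ≠ 0) :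
    IsPSDKernel (fun x y ↦ fourierKernel e L ν x y - fourierKernel e L μ x y) ↔ μ ≤ ν := by
  have quadratic_form_nonneg_iff {n : ℕ} (x : Fin n → W) (c : Fin n → ℂ) :
      0 ≤ ∑ j, ∑ k, c j * conj (c k) *
          (fourierKernel e L ν (x j) (x k) - fourierKernel e L μ (x j) (x k)) ↔
        ∫ v, ‖(∑ j, c j • char he hL (x j)) v‖ ^ 2 ∂μ ≤
          ∫ v, ‖(∑ j, c j • char he hL (x j)) v‖ ^ 2 ∂ν := by
    simp_rw [mul_sub, Finset.sum_sub_distrib]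
    rw [sum_mul_fourierKernel_eq_integral_norm_sq he hL,
      sum_mul_fourierKernel_eq_integral_norm_sq he hL, sub_nonneg, Complex.real_le_real]
  rw [measure_le_iff_forall_mem_subalgebra_integral_norm_sq_le
    (separatesPoints_charPoly he he' hL hL')]
  simp_rw [IsPSDKernel, quadratic_form_nonneg_iff, mem_charPoly_iff_exists_sum_smul_char]
  constructor
  · rintro h _ ⟨n, x, c, rfl⟩
    exact h n x c
  · exact fun h n x c ↦ h _ ⟨n, x, c, rfl⟩

theorem isPSDKernel_smul_fourierKernel_sub_iff (he : Continuous e) (he' : e ≠ 1)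
    (hL : Continuous fun p : V × W ↦ L p.1 p.2) (hL' : ∀ v ≠ 0, L v ≠ 0) {r : ℝ} (hr : 0 ≤ r) :
    IsPSDKernel (fun x y ↦ (r : ℂ) * fourierKernel e L ν x y - fourierKernel e L μ x y) ↔
      μ ≪ ν ∧ essSup (μ.rnDeriv ν) ν ≤ ENNReal.ofReal r := by
  have : IsFiniteMeasure (ENNReal.ofReal r • ν) := Measure.smul_finite ν ENNReal.ofReal_ne_top
  simp_rw [← fourierKernel_smul_measure e L ν hr]
  rw [isPSDKernel_fourierKernel_sub_iff_le he he' hL hL', measure_le_smul_iff_essSup_rnDeriv_le]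

lemma setOf_isPSDKernel_smul_fourierKernel_sub_eq_Ici (he : Continuous e) (he' : e ≠ 1)
    (hL : Continuous fun p : V × W ↦ L p.1 p.2) (hL' : ∀ v ≠ 0, L v ≠ 0) (hac : μ ≪ ν)
    (hfin : essSup (μ.rnDeriv ν) ν ≠ ⊤) :
    {r : ℝ | 0 ≤ r ∧
        IsPSDKernel (fun x y ↦ (r : ℂ) * fourierKernel e L ν x y - fourierKernel e L μ x y)} =
      Set.Ici (essSup (μ.rnDeriv ν) ν).toReal := by
  ext r
  rw [Set.mem_ofPred_eq, Set.mem_Ici,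
    and_congr_right (isPSDKernel_smul_fourierKernel_sub_iff he he' hL hL')]
  constructor
  · exact fun ⟨hr, _, hle⟩ ↦ ENNReal.toReal_le_of_le_ofReal hr hle
  · intro hle
    have hr : 0 ≤ r := ENNReal.toReal_nonneg.trans hle
    exact ⟨hr, hac, (ENNReal.le_ofReal_iff_toReal_le hfin hr).2 hle⟩

theorem translationInvariant_inclusion_iff_general (he : Continuous e) (he' : e ≠ 1)
    (hL : Continuous fun p : V × W ↦ L p.1 p.2) (hL' : ∀ v ≠ 0, L v ≠ 0) (K G : W → W → ℂ)
    (hK : ∀ x y, K x y = fourierKernel e L μ x y) (hG : ∀ x y, G x y = fourierKernel e L ν x y) :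
    ((∃ lam : ℝ, 0 ≤ lam ∧ IsPSDKernel (fun x y ↦ (lam : ℂ) * G x y - K x y)) ↔
      (μ ≪ ν ∧ essSup (μ.rnDeriv ν) ν < ⊤)) ∧
    ((μ ≪ ν ∧ essSup (μ.rnDeriv ν) ν < ⊤) →
      sInf {lam : ℝ | 0 ≤ lam ∧ IsPSDKernel (fun x y ↦ (lam : ℂ) * G x y - K x y)} =
        (essSup (μ.rnDeriv ν) ν).toReal) := by
  obtain rfl : K = fourierKernel e L μ := funext₂ hK
  obtain rfl : G = fourierKernel e L ν := funext₂ hG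
  refine ⟨⟨fun ⟨lam, hlam, hpsd⟩ ↦ ?_, fun ⟨hac, hfin⟩ ↦ ?_⟩, fun ⟨hac, hfin⟩ ↦ ?_⟩
  · have ⟨hac, hle⟩ := (isPSDKernel_smul_fourierKernel_sub_iff he he' hL hL' hlam).1 hpsd
    exact ⟨hac, hle.trans_lt ENNReal.ofReal_lt_top⟩
  · exact ⟨_, (setOf_isPSDKernel_smul_fourierKernel_sub_eq_Ici he he' hL hL' hac hfin.ne).ge
      Set.self_mem_Ici⟩
  · rw [setOf_isPSDKernel_smul_fourierKernel_sub_eq_Ici he he' hL hL' hac hfin.ne, csInf_Ici]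

end FourierKernel

lemma integral_exp_I_mul_inner_eq_fourierKernel {E : Type*} [NormedAddCommGroup E]
    [InnerProductSpace ℝ E] [MeasurableSpace E] (μ : Measure E) (x y : E) :
    ∫ ξ, Complex.exp (Complex.I * ((inner ℝ (x - y) ξ : ℝ) : ℂ)) ∂μ =
      fourierKernel Real.probChar (innerₗ E) μ x y := by
  simp only [fourierKernel, Real.probChar_apply, innerₗ_apply_apply, real_inner_comm, mul_comm]

/-- For translation invariant kernels `K, G` given as Fourier transforms of finite
positive Borel measures `μ, ν` on `ℝ^d`, there exists `λ ≥ 0` with `λG − K` a positive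
semidefinite kernel iff `μ ≪ ν` with `dμ/dν` `ν`-essentially bounded; in that case the
infimum of such `λ` is the `ν`-essential supremum of `dμ/dν`. -/
theorem translationInvariant_inclusion_iff (d : ℕ)
    (μ ν : Measure (EuclideanSpace ℝ (Fin d))) [IsFiniteMeasure μ] [IsFiniteMeasure ν]
    (K G : EuclideanSpace ℝ (Fin d) → EuclideanSpace ℝ (Fin d) → ℂ)
    (hK : ∀ x y, K x y = ∫ ξ, Complex.exp (Complex.I * ((inner ℝ (x - y) ξ : ℝ) : ℂ)) ∂μ)
    (hG : ∀ x y, G x y = ∫ ξ, Complex.exp (Complex.I * ((inner ℝ (x - y) ξ : ℝ) : ℂ)) ∂ν) :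
    ((∃ lam : ℝ, 0 ≤ lam ∧
        IsPSDKernel (fun x y => (lam : ℂ) * G x y - K x y)) ↔
      (μ ≪ ν ∧ essSup (μ.rnDeriv ν) ν < ⊤)) ∧
    ((μ ≪ ν ∧ essSup (μ.rnDeriv ν) ν < ⊤) →
      sInf {lam : ℝ | 0 ≤ lam ∧
          IsPSDKernel (fun x y => (lam : ℂ) * G x y - K x y)}
        = (essSup (μ.rnDeriv ν) ν).toReal) := by
  simp_rw [integral_exp_I_mul_inner_eq_fourierKernel] at hK hG
  exact translationInvariant_inclusion_iff_general Real.continuous_probChar Real.probChar_ne_one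
    continuous_inner (fun v hv ↦ DFunLike.ne_iff.2 ⟨v, inner_self_ne_zero.2 hv⟩) K G hK hG
end

section
/- Let G_γ(x,y) = exp(−‖x−y‖²/γ) be the Gaussian kernel on ℝ^d with parameter γ > 0, where ‖·‖ is the Euclidean norm. For 0 < γ₁ < γ₂: (a) the function (γ₂/γ₁)^{d/2} G_{γ₁} − G_{γ₂} is a positive semidefinite kernel on ℝ^d; (b) (γ₂/γ₁)^{d/2} is the least constant λ ≥ 0 for which λG_{γ₁} − G_{γ₂} is a positive semidefinite kernel; (c) there is no λ ≥ 0 for which λG_{γ₂} − G_{γ₁} is a positive semidefinite kernel. -/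
open scoped ComplexOrder

/-- The Gaussian kernel `G_γ(x,y) = exp(−‖x−y‖²/γ)` on `ℝ^d`, as a complex-valued kernel. -/
noncomputable def gaussK (d : ℕ) (γ : ℝ) (x y : EuclideanSpace ℝ (Fin d)) : ℂ :=
  ((Real.exp (-‖x - y‖ ^ 2 / γ) : ℝ) : ℂ)

/-!
A translation-invariant kernel `f (x - y)`, with `f` continuous and both `f` and `𝓕 f` integrable,
is positive semidefinite if and only if `𝓕 f ≥ 0`: Fourier inversion writes the kernel as an
integral of rank-one kernels, and conversely `𝓕 f w` is a limit of averages of the kernel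
`𝐞 (-⟪x - y, w⟫) f (x - y)` over pairs of independent Gaussian points. The Fourier transform of
`exp (-‖v‖² / γ)` on an `n`-dimensional space is `(π γ) ^ (n / 2) * exp (-π² γ ‖w‖²)`, so
`λ G_a - G_b` is positive semidefinite if and only if
`(b / a) ^ (n / 2) * exp (π² (a - b) ‖w‖²) ≤ λ` for all `w`. If `a ≤ b`, the left-hand side is
largest at `w = 0`; if `b < a`, it is unbounded.
-/

open MeasureTheory ProbabilityTheory Filter Module
open scoped Topology FourierTransform RealInnerProductSpace ComplexConjugate

section Kernels

variable {X : Type*}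

lemma isPSDKernel_const {a : ℂ} (ha : 0 ≤ a) : IsPSDKernel fun _ _ : X => a := by
  intro n _ c
  have hsq : ∑ j, ∑ k, c j * conj (c k) * a = (∑ j, c j) * star (∑ j, c j) * a := by
    rw [star_sum, Finset.sum_mul_sum]
    simp only [Complex.star_def, Finset.sum_mul]
  exact hsq ▸ mul_nonneg (mul_star_self_nonneg _) ha

lemma IsPSDKernel.mul_conj_mul {K : X → X → ℂ} (hK : IsPSDKernel K) (u : X → ℂ) :
    IsPSDKernel fun x y => u x * conj (u y) * K x y := by
  intro n x c
  have hterm (j k : Fin n) : c j * conj (c k) * (u (x j) * conj (u (x k)) * K (x j) (x k)) =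
      c j * u (x j) * conj (c k * u (x k)) * K (x j) (x k) := by
    rw [map_mul]
    ring
  simpa only [hterm] using hK n x fun j => c j * u (x j)

lemma isPSDKernel_integral {Ω : Type*} [MeasurableSpace Ω] {μ : Measure Ω} {K : Ω → X → X → ℂ}
    (hK : ∀ᵐ ω ∂μ, IsPSDKernel (K ω)) (hint : ∀ x y, Integrable (fun ω => K ω x y) μ) :
    IsPSDKernel fun x y => ∫ ω, K ω x y ∂μ := by
  intro n x c
  have hterm (j k : Fin n) : Integrable (fun ω => c j * conj (c k) * K ω (x j) (x k)) μ :=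
    (hint _ _).const_mul _
  calc 0 ≤ ∫ ω, ∑ j, ∑ k, c j * conj (c k) * K ω (x j) (x k) ∂μ :=
        integral_nonneg_of_ae (hK.mono fun ω hω => hω n x c)
    _ = ∑ j, ∑ k, c j * conj (c k) * ∫ ω, K ω (x j) (x k) ∂μ := by
        rw [integral_finsetSum _ fun j _ => integrable_finsetSum _ fun k _ => hterm j k]
        simp only [integral_finsetSum _ fun k _ => hterm _ k, integral_const_mul]

end Kernels

section MonteCarlo

lemma integral_comp_of_measurePreserving {α β E : Type*} [MeasurableSpace α] [MeasurableSpace β]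
    [NormedAddCommGroup E] [NormedSpace ℝ E] {μ : Measure α} {ν : Measure β} {φ : α → β}
    (hφ : MeasurePreserving φ μ ν) {g : β → E} (hg : AEStronglyMeasurable g ν) :
    ∫ x, g (φ x) ∂μ = ∫ y, g y ∂ν := by
  rw [← hφ.map_eq, integral_map hφ.aemeasurable (hφ.map_eq ▸ hg)]

lemma measurePreserving_eval_prodMk {ι : Type*} [Fintype ι] {X : ι → Type*}
    [∀ i, MeasurableSpace (X i)] (μ : ∀ i, Measure (X i)) [∀ i, IsProbabilityMeasure (μ i)]
    {j k : ι} (hjk : j ≠ k) :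
    MeasurePreserving (fun x : ∀ i, X i => (x j, x k)) (Measure.pi μ) ((μ j).prod (μ k)) where
  measurable := by fun_prop
  map_eq := by
    have hind : IndepFun (fun x : ∀ i, X i => x j) (fun x => x k) (Measure.pi μ) :=
      (iIndepFun_pi (X := fun _ => id) fun _ => aemeasurable_id).indepFun hjk
    rw [hind.map_prod_eq_prod_map_map (measurable_pi_apply j).aemeasurable
        (measurable_pi_apply k).aemeasurable,
      (measurePreserving_eval μ j).map_eq, (measurePreserving_eval μ k).map_eq]

variable {X : Type*} [MeasurableSpace X] {μ : Measure X} [IsProbabilityMeasure μ] {K : X → X → ℂ}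

lemma integral_pi_sum_sum (hK : Integrable (fun z : X × X => K z.1 z.2) (μ.prod μ))
    (hdiag : Integrable (fun x => K x x) μ) (n : ℕ) :
    ∫ x : Fin n → X, ∑ j, ∑ k, K (x j) (x k) ∂(Measure.pi fun _ => μ) =
      n * ∫ x, K x x ∂μ + (n * n - n) * ∫ z, K z.1 z.2 ∂(μ.prod μ) := by
  set D := ∫ x, K x x ∂μ
  set I := ∫ z, K z.1 z.2 ∂(μ.prod μ)
  have hpair (j k : Fin n) :
      Integrable (fun x : Fin n → X => K (x j) (x k)) (Measure.pi fun _ => μ) ∧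
        ∫ x : Fin n → X, K (x j) (x k) ∂(Measure.pi fun _ => μ) =
          (if j = k then D - I else 0) + I := by
    obtain rfl | hjk := eq_or_ne j k
    · have heval := measurePreserving_eval (fun _ : Fin n => μ) j
      refine ⟨heval.integrable_comp_of_integrable hdiag, ?_⟩
      simpa using integral_comp_of_measurePreserving heval hdiag.aestronglyMeasurable
    · have heval := measurePreserving_eval_prodMk (fun _ : Fin n => μ) hjk
      refine ⟨heval.integrable_comp_of_integrable hK, ?_⟩
      simpa [hjk] using integral_comp_of_measurePreserving heval hK.aestronglyMeasurable
  rw [integral_finsetSum _ fun j _ => integrable_finsetSum _ fun k _ => (hpair j k).1]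
  simp only [integral_finsetSum _ fun k _ => (hpair _ k).1, hpair, Finset.sum_add_distrib,
    Finset.sum_ite_eq, Finset.mem_univ, if_true, Finset.sum_const, Finset.card_univ,
    Fintype.card_fin, nsmul_eq_mul]
  ring

-- The quadratic form at `n` independent samples of law `μ` has nonnegative mean. After division
-- by `n ^ 2`, the `n` diagonal terms become negligible as `n → ∞`.
theorem IsPSDKernel.integral_prod_nonneg (hpsd : IsPSDKernel K)
    (hK : Integrable (fun z : X × X => K z.1 z.2) (μ.prod μ))
    (hdiag : Integrable (fun x => K x x) μ) : 0 ≤ ∫ z, K z.1 z.2 ∂(μ.prod μ) := by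
  set D := ∫ x, K x x ∂μ
  set I := ∫ z, K z.1 z.2 ∂(μ.prod μ)
  have hmean (n : ℕ) (hn : n ≠ 0) : 0 ≤ (n : ℂ)⁻¹ * (D - I) + I := by
    have hsum : 0 ≤ n * D + (n * n - n) * I := by
      rw [← integral_pi_sum_sum hK hdiag]
      exact integral_nonneg fun x => by simpa using hpsd n x 1
    have hinv : (0 : ℂ) ≤ (n : ℂ)⁻¹ * (n : ℂ)⁻¹ := by positivity
    convert mul_nonneg hinv hsum using 1
    field
  have hlim : Tendsto (fun n : ℕ => (n : ℂ)⁻¹ * (D - I) + I) atTop (𝓝 I) := by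
    simpa using (tendsto_inv_atTop_nhds_zero_nat (𝕜 := ℂ)).mul_const (D - I) |>.add_const I
  exact ge_of_tendsto hlim ((eventually_ne_atTop 0).mono hmean)

end MonteCarlo

section GaussianAveraging

lemma tilted_prod_tilted {α β : Type*} [MeasurableSpace α] [MeasurableSpace β] {μ : Measure α}
    {ν : Measure β} [SFinite μ] [SFinite ν] {f : α → ℝ} {g : β → ℝ} (hf : Measurable f)
    (hg : Measurable g) :
    (μ.tilted f).prod (ν.tilted g) = (μ.prod ν).tilted fun z => f z.1 + g z.2 := by
  simp only [Measure.tilted, Real.exp_add]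
  rw [prod_withDensity (by fun_prop) (by fun_prop),
    integral_prod_mul (fun x => Real.exp (f x)) fun y => Real.exp (g y)]
  congr 1 with z
  rw [← ENNReal.ofReal_mul (by positivity), div_mul_div_comm]

lemma measurePreserving_midpoint_sub {E : Type*} [NormedAddCommGroup E] [NormedSpace ℝ E]
    [MeasurableSpace E] [BorelSpace E] [SecondCountableTopology E] (μ : Measure E) [SFinite μ]
    [μ.IsAddRightInvariant] :
    MeasurePreserving (fun z : E × E => (midpoint ℝ z.1 z.2, z.1 - z.2)) (μ.prod μ) (μ.prod μ) := by
  have hshift : MeasurePreserving (fun p : E × E => (p.1, p.2 + (1 / 2 : ℝ) • p.1))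
      (μ.prod μ) (μ.prod μ) :=
    (MeasurePreserving.id μ).skew_product (by fun_prop)
      (.of_forall fun u => (measurePreserving_add_right μ ((1 / 2 : ℝ) • u)).map_eq)
  convert! Measure.measurePreserving_swap.comp (hshift.comp (measurePreserving_sub_prod μ μ))
    using 1
  ext z
  · simp [midpoint_eq_smul_add]
    module
  · simp

variable {V : Type*} [NormedAddCommGroup V] [InnerProductSpace ℝ V]

lemma norm_sq_add_norm_sq_eq_midpoint (x y : V) :
    ‖x‖ ^ 2 + ‖y‖ ^ 2 = 2 * ‖midpoint ℝ x y‖ ^ 2 + ‖x - y‖ ^ 2 / 2 := by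
  have hmid : ‖midpoint ℝ x y‖ = ‖x + y‖ / 2 := by
    rw [midpoint_eq_smul_add, norm_smul]
    norm_num
    ring
  rw [hmid]
  linear_combination -(parallelogram_law_with_norm ℝ x y) / 2

variable {E : Type*} [NormedAddCommGroup E] [NormedSpace ℝ E]

lemma exp_smul_sub_eq_midpoint (f : V → E) (t : ℝ) (x y : V) :
    Real.exp (-(2 * t) * ‖x‖ ^ 2 + -(2 * t) * ‖y‖ ^ 2) • f (x - y) =
      Real.exp (-(4 * t) * ‖midpoint ℝ x y‖ ^ 2) • Real.exp (-t * ‖x - y‖ ^ 2) • f (x - y) := by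
  rw [← mul_smul, ← Real.exp_add]
  congr 2
  linear_combination (-2 * t) * norm_sq_add_norm_sq_eq_midpoint x y

variable [FiniteDimensional ℝ V] [MeasurableSpace V] [BorelSpace V] {f : V → E}

lemma integrable_exp_neg_mul_sq_norm {b : ℝ} (hb : 0 < b) :
    Integrable fun v : V => Real.exp (-b * ‖v‖ ^ 2) := by
  have h := GaussianFourier.integrable_cexp_neg_mul_sq_norm_add (b := b) (by simpa using hb) 0
    (0 : V)
  simpa [Complex.norm_exp, ← Complex.ofReal_pow] using h.norm

lemma integrable_exp_smul (hf : Integrable f) {t : ℝ} (ht : 0 < t) :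
    Integrable fun u => Real.exp (-t * ‖u‖ ^ 2) • f u := by
  have hmeas : AEStronglyMeasurable (fun u : V => Real.exp (-t * ‖u‖ ^ 2)) volume := by fun_prop
  refine hf.bdd_smul 1 hmeas (.of_forall fun u => ?_)
  rw [Real.norm_of_nonneg (Real.exp_pos _).le, Real.exp_le_one_iff, neg_mul]
  exact neg_nonpos.2 (by positivity)

lemma integrable_exp_smul_sub (hf : Integrable f) {t : ℝ} (ht : 0 < t) :
    Integrable (fun z : V × V =>
      Real.exp (-(2 * t) * ‖z.1‖ ^ 2 + -(2 * t) * ‖z.2‖ ^ 2) • f (z.1 - z.2))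
      (volume.prod volume) := by
  have hM : Integrable fun m : V => Real.exp (-(4 * t) * ‖m‖ ^ 2) :=
    integrable_exp_neg_mul_sq_norm (by positivity)
  simpa only [exp_smul_sub_eq_midpoint, Function.comp_def] using
    (measurePreserving_midpoint_sub (volume : Measure V)).integrable_comp_of_integrable
      (hM.smul_prod (integrable_exp_smul hf ht))

lemma integral_exp_smul_sub (hf : Integrable f) {t : ℝ} (ht : 0 < t) :
    ∫ z : V × V, Real.exp (-(2 * t) * ‖z.1‖ ^ 2 + -(2 * t) * ‖z.2‖ ^ 2) • f (z.1 - z.2)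
        ∂(volume.prod volume) =
      (∫ m : V, Real.exp (-(4 * t) * ‖m‖ ^ 2)) • ∫ u, Real.exp (-t * ‖u‖ ^ 2) • f u := by
  have hM : Integrable fun m : V => Real.exp (-(4 * t) * ‖m‖ ^ 2) :=
    integrable_exp_neg_mul_sq_norm (by positivity)
  simp only [exp_smul_sub_eq_midpoint]
  rw [integral_comp_of_measurePreserving (measurePreserving_midpoint_sub (volume : Measure V))
    (hM.smul_prod (integrable_exp_smul hf ht)).aestronglyMeasurable]
  exact integral_prod_smul (fun m : V => Real.exp (-(4 * t) * ‖m‖ ^ 2))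
    fun u => Real.exp (-t * ‖u‖ ^ 2) • f u

-- Average the kernel over two independent Gaussian points: their midpoint and their difference
-- are again independent, so only the Gaussian average of `f` survives, up to a positive factor.
lemma integral_exp_smul_nonneg_of_isPSDKernel_sub {f : V → ℂ} (hf : Integrable f)
    (hpsd : IsPSDKernel fun x y => f (x - y)) {t : ℝ} (ht : 0 < t) :
    0 ≤ ∫ u, Real.exp (-t * ‖u‖ ^ 2) • f u := by
  let w (x : V) : ℝ := -(2 * t) * ‖x‖ ^ 2
  have hw : Integrable fun x => Real.exp (w x) := integrable_exp_neg_mul_sq_norm (by positivity)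
  have hw_prod : Integrable (fun z : V × V => Real.exp (w z.1 + w z.2)) (volume.prod volume) := by
    simpa only [Real.exp_add] using hw.mul_prod hw
  have hM : Integrable fun m : V => Real.exp (-(4 * t) * ‖m‖ ^ 2) :=
    integrable_exp_neg_mul_sq_norm (by positivity)
  have htilted : (volume.tilted w).prod (volume.tilted w) =
      (volume.prod volume).tilted fun z => w z.1 + w z.2 :=
    tilted_prod_tilted (by fun_prop) (by fun_prop)
  have := isProbabilityMeasure_tilted hw
  have hmean : 0 ≤ ∫ z, f (z.1 - z.2) ∂((volume.tilted w).prod (volume.tilted w)) := by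
    refine hpsd.integral_prod_nonneg ?_ (by simp)
    rw [htilted, integrable_tilted_iff hw_prod]
    exact integrable_exp_smul_sub hf ht
  rw [htilted, integral_tilted] at hmean
  simp only [div_eq_inv_mul, mul_smul, integral_smul, w, integral_exp_smul_sub hf ht] at hmean
  rwa [smul_nonneg_iff_nonneg_of_pos_left (inv_pos.2 (integral_exp_pos hw_prod)),
    smul_nonneg_iff_nonneg_of_pos_left (integral_exp_pos hM)] at hmean

end GaussianAveraging

section Fourier

variable {V : Type*} [NormedAddCommGroup V] [InnerProductSpace ℝ V]

lemma coe_fourierChar_inner_sub (v x y : V) :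
    (𝐞 ⟪v, x - y⟫ : ℂ) = 𝐞 ⟪v, x⟫ * conj (𝐞 ⟪v, y⟫ : ℂ) := by
  rw [inner_sub_right, AddChar.map_sub_eq_div, Circle.coe_div, ← Circle.coe_inv_eq_conj,
    Circle.coe_inv, div_eq_mul_inv]

lemma IsPSDKernel.fourierChar_smul {f : V → ℂ} (w : V)
    (hpsd : IsPSDKernel fun x y => f (x - y)) :
    IsPSDKernel fun x y => 𝐞 (-⟪x - y, w⟫) • f (x - y) := by
  have hphase (x y : V) : (𝐞 (-⟪x - y, w⟫) : ℂ) = 𝐞 ⟪-w, x⟫ * conj (𝐞 ⟪-w, y⟫ : ℂ) := by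
    rw [← coe_fourierChar_inner_sub, inner_neg_left, real_inner_comm]
  simpa only [Circle.smul_def, smul_eq_mul, hphase] using
    hpsd.mul_conj_mul fun x => (𝐞 ⟪-w, x⟫ : ℂ)

variable [FiniteDimensional ℝ V] [MeasurableSpace V] [BorelSpace V] {f : V → ℂ}

theorem fourier_nonneg_of_isPSDKernel_sub (hf : Integrable f)
    (hpsd : IsPSDKernel fun x y => f (x - y)) (w : V) : 0 ≤ 𝓕 f w := by
  have hint : Integrable fun v => 𝐞 (-⟪v, w⟫) • f v :=
    (Real.fourierIntegral_convergent_iff w).2 hf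
  refine ge_of_tendsto (Real.tendsto_integral_cexp_sq_smul hint) ?_
  filter_upwards [eventually_gt_atTop 0] with c hc
  simpa using
    integral_exp_smul_nonneg_of_isPSDKernel_sub hint (hpsd.fourierChar_smul w) (inv_pos.2 hc)

lemma fourier_const_mul_sub {g : V → ℂ} (hf : Integrable f) (hg : Integrable g) (c : ℂ) (w : V) :
    𝓕 (fun v => c * f v - g v) w = c * 𝓕 f w - 𝓕 g w := by
  have hf' := (Real.fourierIntegral_convergent_iff w).2 hf
  have hg' := (Real.fourierIntegral_convergent_iff w).2 hg
  have hterm (v : V) : 𝐞 (-⟪v, w⟫) • (c * f v - g v) =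
      c * 𝐞 (-⟪v, w⟫) • f v - 𝐞 (-⟪v, w⟫) • g v := by
    simp only [Circle.smul_def, smul_eq_mul]
    ring
  simp only [Real.fourier_eq, hterm]
  rw [integral_sub (hf'.const_mul c) hg', integral_const_mul]

theorem isPSDKernel_fourierInv_sub (hf : Integrable f) (hnonneg : ∀ v, 0 ≤ f v) :
    IsPSDKernel fun x y => 𝓕⁻ f (x - y) := by
  simp only [Real.fourierInv_eq, Circle.smul_def, coe_fourierChar_inner_sub]
  refine isPSDKernel_integral
    (.of_forall fun v => (isPSDKernel_const (hnonneg v)).mul_conj_mul _) fun x y => ?_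
  have h := (Real.fourierIntegral_convergent_iff (y - x)).2 hf
  simpa only [← inner_neg_right, neg_sub, Circle.smul_def, coe_fourierChar_inner_sub] using h

theorem isPSDKernel_sub_iff_fourier_nonneg (hcont : Continuous f) (hf : Integrable f)
    (hFf : Integrable (𝓕 f)) : IsPSDKernel (fun x y => f (x - y)) ↔ ∀ w, 0 ≤ 𝓕 f w := by
  refine ⟨fourier_nonneg_of_isPSDKernel_sub hf, fun h => ?_⟩
  simpa only [hcont.fourierInv_fourier_eq hf hFf] using isPSDKernel_fourierInv_sub hFf h

end Fourier

section Gaussian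

variable {V : Type*} [NormedAddCommGroup V]

/-- The radial profile `exp (-‖v‖² / γ)` of the Gaussian kernel, so that
`G_γ(x, y) = gaussianProfile γ (x - y)`; it is complex-valued so that its Fourier transform is
defined. -/
noncomputable def gaussianProfile (γ : ℝ) (v : V) : ℂ :=
  (Real.exp (-‖v‖ ^ 2 / γ) : ℝ)

@[fun_prop]
lemma continuous_gaussianProfile (γ : ℝ) : Continuous (gaussianProfile (V := V) γ) := by
  unfold gaussianProfile
  fun_prop

variable [InnerProductSpace ℝ V] [FiniteDimensional ℝ V] [MeasurableSpace V] [BorelSpace V]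

lemma integrable_gaussianProfile {γ : ℝ} (hγ : 0 < γ) :
    Integrable (gaussianProfile (V := V) γ) := by
  have h := (integrable_exp_neg_mul_sq_norm (V := V) (inv_pos.2 hγ)).ofReal (𝕜 := ℂ)
  refine h.congr (.of_forall fun v => ?_)
  simp [gaussianProfile, div_eq_inv_mul]

lemma fourier_gaussianProfile {γ : ℝ} (hγ : 0 < γ) (w : V) :
    𝓕 (gaussianProfile (V := V) γ) w =
      ((Real.pi * γ) ^ (finrank ℝ V / 2 : ℝ) : ℝ) * gaussianProfile (1 / (Real.pi ^ 2 * γ)) w := by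
  have hprofile : gaussianProfile (V := V) γ = fun v => Complex.exp (-(γ⁻¹ : ℝ) * ‖v‖ ^ 2) := by
    ext v
    simp [gaussianProfile, div_eq_inv_mul]
  rw [hprofile, fourier_gaussian_innerProductSpace (by simpa using hγ), gaussianProfile,
    Complex.ofReal_cpow (by positivity)]
  push_cast
  congr 2 <;> field

lemma integrable_fourier_gaussianProfile {γ : ℝ} (hγ : 0 < γ) :
    Integrable (𝓕 (gaussianProfile (V := V) γ)) := by
  rw [funext (fourier_gaussianProfile hγ)]
  exact (integrable_gaussianProfile (by positivity)).const_mul _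

theorem isPSDKernel_gaussianProfile_sub_iff {a b : ℝ} (ha : 0 < a) (hb : 0 < b) (lam : ℝ) :
    IsPSDKernel (fun x y : V => lam * gaussianProfile a (x - y) - gaussianProfile b (x - y)) ↔
      ∀ w : V, (b / a) ^ (finrank ℝ V / 2 : ℝ) * Real.exp (Real.pi ^ 2 * (a - b) * ‖w‖ ^ 2) ≤
        lam := by
  have hfourier (w : V) : 𝓕 (fun v : V => lam * gaussianProfile a v - gaussianProfile b v) w =
      lam * 𝓕 (gaussianProfile (V := V) a) w - 𝓕 (gaussianProfile (V := V) b) w :=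
    fourier_const_mul_sub (integrable_gaussianProfile ha) (integrable_gaussianProfile hb) lam w
  have hFint : Integrable (𝓕 fun v : V => lam * gaussianProfile a v - gaussianProfile b v) := by
    rw [funext hfourier]
    exact ((integrable_fourier_gaussianProfile ha).const_mul _).sub
      (integrable_fourier_gaussianProfile hb)
  rw [isPSDKernel_sub_iff_fourier_nonneg
    (f := fun v : V => lam * gaussianProfile a v - gaussianProfile b v)
    (by fun_prop)
    (((integrable_gaussianProfile ha).const_mul _).sub (integrable_gaussianProfile hb)) hFint]
  refine forall_congr' fun w => ?_
  have hratio : (Real.pi * b) ^ (finrank ℝ V / 2 : ℝ) *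
        Real.exp (-‖w‖ ^ 2 / (1 / (Real.pi ^ 2 * b))) =
      (b / a) ^ (finrank ℝ V / 2 : ℝ) * Real.exp (Real.pi ^ 2 * (a - b) * ‖w‖ ^ 2) *
        ((Real.pi * a) ^ (finrank ℝ V / 2 : ℝ) *
          Real.exp (-‖w‖ ^ 2 / (1 / (Real.pi ^ 2 * a)))) := by
    rw [mul_mul_mul_comm, ← Real.mul_rpow (by positivity) (by positivity), ← Real.exp_add]
    congr 2 <;> field
  rw [hfourier, fourier_gaussianProfile ha, fourier_gaussianProfile hb]
  simp only [gaussianProfile, ← Complex.ofReal_mul, ← Complex.ofReal_sub, Complex.zero_le_real,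
    sub_nonneg]
  rw [hratio, mul_le_mul_iff_left₀ (by positivity)]

end Gaussian

section GaussianInclusion

variable {V : Type*} [NormedAddCommGroup V] [InnerProductSpace ℝ V] [FiniteDimensional ℝ V]

theorem isPSDKernel_gaussianProfile_sub_iff_of_le {a b : ℝ} (ha : 0 < a) (hab : a ≤ b) (lam : ℝ) :
    IsPSDKernel (fun x y : V => lam * gaussianProfile a (x - y) - gaussianProfile b (x - y)) ↔
      (b / a) ^ (finrank ℝ V / 2 : ℝ) ≤ lam := by
  borelize V
  have hb := ha.trans_le hab
  rw [isPSDKernel_gaussianProfile_sub_iff ha hb]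
  refine ⟨fun h => by simpa using h 0, fun h w => le_trans ?_ h⟩
  refine mul_le_of_le_one_right (by positivity) (Real.exp_le_one_iff.2 ?_)
  exact mul_nonpos_of_nonpos_of_nonneg
    (mul_nonpos_of_nonneg_of_nonpos (by positivity) (sub_nonpos.2 hab)) (by positivity)

theorem not_isPSDKernel_gaussianProfile_sub_of_lt [Nontrivial V] {a b : ℝ} (hb : 0 < b)
    (hba : b < a) (lam : ℝ) : ¬ IsPSDKernel fun x y : V =>
      lam * gaussianProfile a (x - y) - gaussianProfile b (x - y) := by
  borelize V
  have ha := hb.trans hba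
  rw [isPSDKernel_gaussianProfile_sub_iff ha hb, not_forall]
  set C := (b / a) ^ (finrank ℝ V / 2 : ℝ)
  have hC : 0 < C := by positivity
  have hκ : 0 < Real.pi ^ 2 * (a - b) := mul_pos (by positivity) (sub_pos.2 hba)
  have hunbounded :
      Tendsto (fun r : ℝ => C * Real.exp (Real.pi ^ 2 * (a - b) * r ^ 2)) atTop atTop :=
    (Real.tendsto_exp_atTop.comp
      ((tendsto_pow_atTop two_ne_zero).const_mul_atTop hκ)).const_mul_atTop hC
  obtain ⟨r, hlarge, hr⟩ :=
    ((hunbounded.eventually_gt_atTop lam).and (eventually_ge_atTop 0)).exists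
  obtain ⟨w, rfl⟩ := exists_norm_eq V hr
  exact ⟨w, hlarge.not_ge⟩

theorem gaussian_inclusion_general [Nontrivial V] {γ₁ γ₂ : ℝ} (hγ₁ : 0 < γ₁) (h₁₂ : γ₁ < γ₂) :
    IsPSDKernel (fun x y : V => ((γ₂ / γ₁) ^ (finrank ℝ V / 2 : ℝ) : ℝ) *
      gaussianProfile γ₁ (x - y) - gaussianProfile γ₂ (x - y)) ∧
    IsLeast {lam : ℝ | 0 ≤ lam ∧ IsPSDKernel (fun x y : V =>
        lam * gaussianProfile γ₁ (x - y) - gaussianProfile γ₂ (x - y))}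
      ((γ₂ / γ₁) ^ (finrank ℝ V / 2 : ℝ)) ∧
    ¬ ∃ lam : ℝ, 0 ≤ lam ∧ IsPSDKernel (fun x y : V =>
      lam * gaussianProfile γ₂ (x - y) - gaussianProfile γ₁ (x - y)) := by
  have hγ₂ := hγ₁.trans h₁₂
  have hiff := isPSDKernel_gaussianProfile_sub_iff_of_le (V := V) hγ₁ h₁₂.le
  have hpsd := (hiff _).2 le_rfl
  refine ⟨hpsd, ⟨⟨by positivity, hpsd⟩, fun lam hlam => (hiff lam).1 hlam.2⟩, ?_⟩
  rintro ⟨lam, -, hlam⟩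
  exact not_isPSDKernel_gaussianProfile_sub_of_lt hγ₁ h₁₂ lam hlam

end GaussianInclusion

/-- For `0 < γ₁ < γ₂`: `(γ₂/γ₁)^{d/2} G_{γ₁} − G_{γ₂}` is a positive semidefinite kernel,
`(γ₂/γ₁)^{d/2}` is the least such constant, and no `λ ≥ 0` makes `λG_{γ₂} − G_{γ₁}`
positive semidefinite. -/
theorem gaussian_inclusion (d : ℕ) (hd : 0 < d) (γ₁ γ₂ : ℝ) (hγ₁ : 0 < γ₁) (h₁₂ : γ₁ < γ₂) :
    IsPSDKernel (fun x y : EuclideanSpace ℝ (Fin d) =>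
      (((γ₂ / γ₁) ^ ((d : ℝ) / 2) : ℝ) : ℂ) * gaussK d γ₁ x y - gaussK d γ₂ x y) ∧
    IsLeast {lam : ℝ | 0 ≤ lam ∧
        IsPSDKernel (fun x y : EuclideanSpace ℝ (Fin d) =>
          (lam : ℂ) * gaussK d γ₁ x y - gaussK d γ₂ x y)}
      ((γ₂ / γ₁) ^ ((d : ℝ) / 2)) ∧
    ¬ ∃ lam : ℝ, 0 ≤ lam ∧
      IsPSDKernel (fun x y : EuclideanSpace ℝ (Fin d) =>
        (lam : ℂ) * gaussK d γ₂ x y - gaussK d γ₁ x y) := by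
  have : Nonempty (Fin d) := ⟨⟨0, hd⟩⟩
  simpa only [finrank_euclideanSpace_fin] using!
    gaussian_inclusion_general (V := EuclideanSpace ℝ (Fin d)) hγ₁ h₁₂
end

section
/- Let B_p(x,y) = ∫_{ℝ^d} e^{i⟨x−y,ξ⟩} b_p(ξ) dξ be the B-spline kernel on ℝ^d of even order p, where b_p(ξ) = (2π)^{−d} ∏_{j=1}^d (sin(ξ_j/2)/(ξ_j/2))^p, and let ℰ_σ(x,y) = exp(−‖x−y‖/σ) be the ℓ²-norm exponential kernel with parameter σ > 0, where ‖·‖ is the Euclidean norm. Then: (a) there is no λ ≥ 0 for which λB_p − ℰ_σ is a positive semidefinite kernel on ℝ^d; (b) there exists λ ≥ 0 for which λℰ_σ − B_p is a positive semidefinite kernel on ℝ^d if and only if p ≥ d+1; (c) if p ≥ d+1, then the least such λ is at most (2^{p−d}/(σ^d π^{(d−1)/2})) · (1+σ²d)^{(d+1)/2}/Γ((d+1)/2), where Γ is the Gamma function. -/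
open MeasureTheory
open scoped ComplexOrder

/-- The Fourier density `b_p(ξ) = (2π)^{−d} ∏_j (sin(ξ_j/2)/(ξ_j/2))^p` of the
B-spline kernel of order `p`. -/
noncomputable def bsplineDensity (d p : ℕ) (ξ : EuclideanSpace ℝ (Fin d)) : ℝ :=
  (2 * Real.pi) ^ (-(d : ℤ)) *
    ∏ j, (if ξ j = 0 then 1 else Real.sin (ξ j / 2) / (ξ j / 2)) ^ p

/-- The B-spline kernel `B_p(x,y) = ∫_{ℝ^d} e^{i⟨x−y,ξ⟩} b_p(ξ) dξ` on `ℝ^d`. -/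
noncomputable def bsplineK (d p : ℕ) (x y : EuclideanSpace ℝ (Fin d)) : ℂ :=
  ∫ ξ, Complex.exp (Complex.I * ((inner ℝ (x - y) ξ : ℝ) : ℂ)) * (bsplineDensity d p ξ : ℂ)

/-- The `ℓ²`-norm exponential kernel `ℰ_σ(x,y) = exp(−‖x−y‖/σ)` on `ℝ^d`. -/
noncomputable def l2expK (d : ℕ) (σ : ℝ) (x y : EuclideanSpace ℝ (Fin d)) : ℂ :=
  ((Real.exp (-‖x - y‖ / σ) : ℝ) : ℂ)

/-!
A translation-invariant kernel with a continuous integrable spectral density `f` is positive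
semidefinite iff `0 ≤ f`. If `0 ≤ f`, its quadratic forms are `∫ |∑ j, c j * exp (i⟨x j, ξ⟩)|² f`.
Conversely, averaging the quadratic form over many independent Gaussian sample points gives
`0 ≤ ∫ exp (-a ‖ξ‖²) f ξ` for all `0 ≤ a`; letting `a → ∞` yields `0 ≤ f 0`, and the other points
are reached by modulating the kernel, which translates `f`.

The spectral density of the exponential kernel is a multivariate Cauchy density, being the mixture
of Gaussians given by the Gamma integral. Domination of kernels therefore becomes a pointwise
comparison of two explicit densities. The B-spline density has zeros while the Cauchy density has
none; and along a suitable sequence on a coordinate axis it decays like `t ^ (-p)`, against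
`t ^ (-(d + 1))` for the Cauchy density. The constant comes from `|sinc t| ≤ 1` and
`|t * sinc t| ≤ 1`.
-/

open Filter Module ProbabilityTheory
open scoped ComplexConjugate Topology

lemma measurePreserving_eval_pair {ι : Type*} [Fintype ι] {Ω : ι → Type*}
    [∀ i, MeasurableSpace (Ω i)] (μ : ∀ i, Measure (Ω i)) [∀ i, IsProbabilityMeasure (μ i)]
    {j k : ι} (hjk : j ≠ k) :
    MeasurePreserving (fun x : ∀ i, Ω i => (x j, x k)) (Measure.pi μ) ((μ j).prod (μ k)) := by
  have hj := measurePreserving_eval μ j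
  have hk := measurePreserving_eval μ k
  have hindep : IndepFun (Function.eval j) (Function.eval k) (Measure.pi μ) :=
    (iIndepFun_pi (X := fun _ => id) fun _ => aemeasurable_id).indepFun hjk
  have hmap := (indepFun_iff_map_prod_eq_prod_map_map hj.aemeasurable hk.aemeasurable).1 hindep
  exact ⟨by fun_prop, by rwa [hj.map_eq, hk.map_eq] at hmap⟩

namespace IsPSDKernel

variable {X : Type*} {K : X → X → ℂ}

lemma mul_conj (hK : IsPSDKernel K) (g : X → ℂ) :
    IsPSDKernel fun x y => g x * conj (g y) * K x y := fun n x c => by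
  refine (hK n x fun j => c j * g (x j)).trans_eq ?_
  refine Finset.sum_congr rfl fun j _ => Finset.sum_congr rfl fun k _ => ?_
  rw [map_mul]
  ring

lemma of_const_nonneg {a : ℂ} (ha : 0 ≤ a) : IsPSDKernel fun _ _ : X => a := fun n x c => by
  simp_rw [← Finset.sum_mul, ← Finset.sum_mul_sum, ← map_sum]
  exact mul_nonneg (mul_star_self_nonneg _) ha

lemma of_integral {Ω : Type*} [MeasurableSpace Ω] {ν : Measure Ω} {k : Ω → X → X → ℂ}
    (hint : ∀ x y, Integrable (fun ω => k ω x y) ν) (hk : ∀ ω, IsPSDKernel (k ω)) :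
    IsPSDKernel fun x y => ∫ ω, k ω x y ∂ν := fun n x c => by
  have hint' (j k) := (hint (x j) (x k)).const_mul (c j * conj (c k))
  simp_rw [← integral_const_mul]
  rw [Finset.sum_congr rfl fun j _ => (integral_finsetSum _ fun k _ => hint' j k).symm,
    ← integral_finsetSum _ fun j _ => integrable_finsetSum _ fun k _ => hint' j k]
  exact integral_nonneg fun ω => hk ω n x c

section Integral

variable [MeasurableSpace X] {μ : Measure X} [IsProbabilityMeasure μ]

/- The right-hand side is the expectation of `∑ j, ∑ k, K (x j) (x k)` over `n` independent
`μ`-distributed points `x j`. -/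
lemma integral_sample_nonneg (hK : IsPSDKernel K) (hdiag : Integrable (fun x => K x x) μ)
    (hint : Integrable (fun z => K z.1 z.2) (μ.prod μ)) (n : ℕ) :
    0 ≤ (n : ℂ) ^ 2 * ∫ z, K z.1 z.2 ∂μ.prod μ +
      n * (∫ x, K x x ∂μ - ∫ z, K z.1 z.2 ∂μ.prod μ) := by
  set D := ∫ x, K x x ∂μ
  set I := ∫ z, K z.1 z.2 ∂μ.prod μ
  let P : Measure (Fin n → X) := Measure.pi fun _ => μ
  have diag (j : Fin n) : MeasurePreserving (Function.eval j) P μ :=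
    measurePreserving_eval (fun _ => μ) j
  have offDiag {j k : Fin n} (hjk : j ≠ k) :
      MeasurePreserving (fun x => (x j, x k)) P (μ.prod μ) :=
    measurePreserving_eval_pair (fun _ => μ) hjk
  have integrable (j k : Fin n) : Integrable (fun x => K (x j) (x k)) P := by
    rcases eq_or_ne j k with rfl | hjk
    · exact (diag j).integrable_comp_of_integrable hdiag
    · exact (offDiag hjk).integrable_comp_of_integrable hint
  have expectation (j k : Fin n) : ∫ x, K (x j) (x k) ∂P = I + if j = k then D - I else 0 := by
    split_ifs with hjk
    · subst hjk
      rw [add_sub_cancel]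
      exact integral_comp_eval (μ := fun _ => μ) hdiag.aestronglyMeasurable
    · have := integral_map (offDiag hjk).aemeasurable (f := fun z : X × X => K z.1 z.2)
        (by simpa only [(offDiag hjk).map_eq] using hint.aestronglyMeasurable)
      rw [add_zero, ← this, (offDiag hjk).map_eq]
  calc 0 ≤ ∫ x, ∑ j, ∑ k, K (x j) (x k) ∂P :=
        integral_nonneg fun x => by simpa using hK n x 1
    _ = ∑ j : Fin n, ∑ k, (I + if j = k then D - I else 0) := by
      rw [integral_finsetSum _ fun j _ => integrable_finsetSum _ fun k _ => integrable j k]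
      simp_rw [integral_finsetSum _ fun k _ => integrable _ k, expectation]
    _ = n ^ 2 * I + n * (D - I) := by
      simp only [Finset.sum_add_distrib, Finset.sum_ite_eq, Finset.mem_univ, if_true,
        Finset.sum_const, Finset.card_univ, Fintype.card_fin, nsmul_eq_mul]
      ring

lemma integral_prod_nonneg_s9 (hK : IsPSDKernel K) (hdiag : Integrable (fun x => K x x) μ)
    (hint : Integrable (fun z => K z.1 z.2) (μ.prod μ)) :
    0 ≤ ∫ z, K z.1 z.2 ∂μ.prod μ := by
  have sample_nonneg := hK.integral_sample_nonneg hdiag hint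
  set D := ∫ x, K x x ∂μ
  set I := ∫ z, K z.1 z.2 ∂μ.prod μ
  have tendsto_I : Tendsto (fun n : ℕ => I + (D - I) / ((n + 1 : ℕ) : ℂ)) atTop (𝓝 I) := by
    have := (tendsto_const_div_atTop_nhds_zero_nat (D - I)).comp (tendsto_add_atTop_nat 1)
    simpa using this.const_add I
  refine ge_of_tendsto' tendsto_I fun n => ?_
  have hn : (0 : ℂ) < ((n + 1 : ℕ) : ℂ) := by exact_mod_cast n.succ_pos
  calc 0 ≤ (((n + 1 : ℕ) : ℂ) ^ 2 * I + ((n + 1 : ℕ) : ℂ) * (D - I)) *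
        (((n + 1 : ℕ) : ℂ) ^ 2)⁻¹ :=
        mul_nonneg (sample_nonneg (n + 1)) (inv_nonneg.2 (pow_pos hn 2).le)
    _ = I + (D - I) / ((n + 1 : ℕ) : ℂ) := by field_simp

end Integral

end IsPSDKernel

lemma cexp_inner_sub {E : Type*} [NormedAddCommGroup E] [InnerProductSpace ℝ E] (x y ξ : E) :
    Complex.exp (Complex.I * ((inner ℝ (x - y) ξ : ℝ) : ℂ)) =
      Complex.exp (Complex.I * ((inner ℝ x ξ : ℝ) : ℂ)) *
        conj (Complex.exp (Complex.I * ((inner ℝ y ξ : ℝ) : ℂ))) := by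
  rw [← Complex.exp_conj, ← Complex.exp_add, inner_sub_left]
  simp only [map_mul, Complex.conj_I, Complex.conj_ofReal, Complex.ofReal_sub]
  ring_nf

lemma integral_cexp_inner_eq_charFun {E : Type*} [NormedAddCommGroup E]
    [InnerProductSpace ℝ E] [MeasurableSpace E] (μ : Measure E) (ξ : E) :
    ∫ x, Complex.exp (Complex.I * ((inner ℝ x ξ : ℝ) : ℂ)) ∂μ = charFun μ ξ := by
  simp_rw [charFun_apply, mul_comm]

section SpectralKernel

variable {E : Type*} [NormedAddCommGroup E] [InnerProductSpace ℝ E] [FiniteDimensional ℝ E]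
  [MeasurableSpace E] [BorelSpace E] {f g : E → ℝ}

/-- The translation-invariant kernel with spectral density `f`, in the convention of `bsplineK`:
no factor `(2π)^{-d}` and no `2π` in the exponent. -/
noncomputable def spectralKernel (f : E → ℝ) (x y : E) : ℂ :=
  ∫ ξ, Complex.exp (Complex.I * ((inner ℝ (x - y) ξ : ℝ) : ℂ)) * (f ξ : ℂ)

lemma integrable_cexp_inner_mul (hf : Integrable f) (z : E) :
    Integrable fun ξ => Complex.exp (Complex.I * ((inner ℝ z ξ : ℝ) : ℂ)) * (f ξ : ℂ) :=
  hf.ofReal.bdd_mul (c := 1) (Continuous.aestronglyMeasurable (by fun_prop))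
    (.of_forall fun ξ => by rw [Complex.norm_exp_I_mul_ofReal])

lemma spectralKernel_const_mul (c : ℝ) (f : E → ℝ) (x y : E) :
    spectralKernel (fun ξ => c * f ξ) x y = c * spectralKernel f x y := by
  simp_rw [spectralKernel, ← integral_const_mul, Complex.ofReal_mul, mul_left_comm]

lemma spectralKernel_sub (hf : Integrable f) (hg : Integrable g) (x y : E) :
    spectralKernel (fun ξ => f ξ - g ξ) x y = spectralKernel f x y - spectralKernel g x y := by
  simp_rw [spectralKernel, Complex.ofReal_sub, mul_sub]
  exact integral_sub (integrable_cexp_inner_mul hf _) (integrable_cexp_inner_mul hg _)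

lemma spectralKernel_integral {Ω : Type*} [MeasurableSpace Ω] {ν : Measure Ω} [SFinite ν]
    {f : E → Ω → ℝ} (hf : Integrable (fun z : E × Ω => f z.1 z.2) (volume.prod ν)) (x y : E) :
    spectralKernel (fun ξ => ∫ ω, f ξ ω ∂ν) x y = ∫ ω, spectralKernel (f · ω) x y ∂ν := by
  simp_rw [spectralKernel, ← integral_complex_ofReal, ← integral_const_mul]
  refine integral_integral_swap (hf.ofReal.bdd_mul (c := 1)
    (f := fun z : E × Ω => Complex.exp (Complex.I * ((inner ℝ (x - y) z.1 : ℝ) : ℂ)))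
    (Measurable.aestronglyMeasurable (by fun_prop))
    (.of_forall fun z => by rw [Complex.norm_exp_I_mul_ofReal]))

lemma spectralKernel_gaussian {b : ℝ} (hb : 0 < b) (x y : E) :
    spectralKernel (fun ξ => Real.exp (-b * ‖ξ‖ ^ 2)) x y =
      (((Real.pi / b) ^ (finrank ℝ E / 2 : ℝ) * Real.exp (-‖x - y‖ ^ 2 / (4 * b)) : ℝ) : ℂ) := by
  have gaussian := GaussianFourier.integral_cexp_neg_mul_sq_norm_add (b := (b : ℂ))
    (by rwa [Complex.ofReal_re]) Complex.I (x - y)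
  rw [Complex.I_sq, neg_one_mul] at gaussian
  rw [Complex.ofReal_mul, Complex.ofReal_cpow (by positivity)]
  push_cast
  refine Eq.trans ?_ gaussian
  rw [spectralKernel]
  congr with ξ
  rw [Complex.exp_add, mul_comm]
  push_cast
  rfl

lemma isPSDKernel_spectralKernel (hf : Integrable f) (h0 : ∀ ξ, 0 ≤ f ξ) :
    IsPSDKernel (spectralKernel f) := by
  refine IsPSDKernel.of_integral (fun x y => integrable_cexp_inner_mul hf _) fun ξ => ?_
  simp_rw [cexp_inner_sub]
  exact (IsPSDKernel.of_const_nonneg (Complex.zero_le_real.2 (h0 ξ))).mul_conj _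

lemma spectralKernel_comp_add_right (f : E → ℝ) (v x y : E) :
    spectralKernel (fun ξ => f (ξ + v)) x y =
      Complex.exp (Complex.I * ((inner ℝ x (-v) : ℝ) : ℂ)) *
        conj (Complex.exp (Complex.I * ((inner ℝ y (-v) : ℝ) : ℂ))) * spectralKernel f x y := by
  have shift := integral_add_right_eq_self (μ := volume) (fun ξ : E =>
    Complex.exp (Complex.I * ((inner ℝ (x - y) (-v) : ℝ) : ℂ)) *
      (Complex.exp (Complex.I * ((inner ℝ (x - y) ξ : ℝ) : ℂ)) * (f ξ : ℂ))) v
  rw [← cexp_inner_sub, spectralKernel, spectralKernel, ← integral_const_mul, ← shift]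
  congr with ξ
  rw [← mul_assoc, ← Complex.exp_add, inner_add_right, inner_neg_right]
  push_cast
  ring_nf

lemma integrable_prod_cexp_inner_sub_mul (hf : Integrable f) (μ : Measure E)
    [IsProbabilityMeasure μ] :
    Integrable (fun w : (E × E) × E =>
      Complex.exp (Complex.I * ((inner ℝ (w.1.1 - w.1.2) w.2 : ℝ) : ℂ)) * (f w.2 : ℂ))
      ((μ.prod μ).prod volume) :=
  (hf.comp_snd (μ.prod μ)).ofReal.bdd_mul (c := 1) (Continuous.aestronglyMeasurable (by fun_prop))
    (.of_forall fun ξ => by rw [Complex.norm_exp_I_mul_ofReal])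

lemma integral_prod_spectralKernel (hf : Integrable f) (μ : Measure E) [IsProbabilityMeasure μ] :
    ∫ z, spectralKernel f z.1 z.2 ∂μ.prod μ = ((∫ ξ, ‖charFun μ ξ‖ ^ 2 * f ξ : ℝ) : ℂ) := by
  simp_rw [spectralKernel]
  rw [integral_integral_swap (integrable_prod_cexp_inner_sub_mul hf μ), ← integral_complex_ofReal]
  congr with ξ
  rw [integral_mul_const]
  simp_rw [cexp_inner_sub]
  rw [integral_prod_mul (fun x : E => Complex.exp (Complex.I * ((inner ℝ x ξ : ℝ) : ℂ)))
    (fun y : E => conj (Complex.exp (Complex.I * ((inner ℝ y ξ : ℝ) : ℂ)))), integral_conj,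
    integral_cexp_inner_eq_charFun, Complex.mul_conj']
  push_cast
  rfl

lemma integral_normSq_charFun_mul_nonneg (hf : Integrable f) (hK : IsPSDKernel (spectralKernel f))
    (μ : Measure E) [IsProbabilityMeasure μ] : 0 ≤ ∫ ξ, ‖charFun μ ξ‖ ^ 2 * f ξ := by
  rw [← Complex.zero_le_real, ← integral_prod_spectralKernel hf]
  refine hK.integral_prod_nonneg_s9 ?_ (integrable_prod_cexp_inner_sub_mul hf μ).integral_prod_left
  simp_rw [spectralKernel, sub_self]
  exact integrable_const _

lemma integral_exp_neg_mul_sq_norm_mul_nonneg (hf : Integrable f)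
    (hK : IsPSDKernel (spectralKernel f)) {a : ℝ} (ha : 0 ≤ a) :
    0 ≤ ∫ ξ, Real.exp (-a * ‖ξ‖ ^ 2) * f ξ := by
  have : IsProbabilityMeasure ((stdGaussian E).map (√a • ·)) :=
    Measure.isProbabilityMeasure_map (by fun_prop)
  convert integral_normSq_charFun_mul_nonneg hf hK ((stdGaussian E).map (√a • ·)) using 4 with ξ
  have harg : (-(‖√a • ξ‖ : ℂ) ^ 2 / 2) = ((-(a * ‖ξ‖ ^ 2) / 2 : ℝ) : ℂ) := by
    rw [← Complex.ofReal_pow, norm_smul, mul_pow, Real.norm_eq_abs, sq_abs, Real.sq_sqrt ha]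
    push_cast
    rfl
  rw [charFun_map_smul, charFun_stdGaussian, harg, Complex.norm_exp_ofReal, ← Real.exp_nat_mul]
  congr 1
  push_cast
  ring

lemma tendsto_gaussian_mean (hf : Integrable f) (h0 : ContinuousAt f 0) :
    Tendsto (fun c : ℝ => (Real.pi * c) ^ (finrank ℝ E / 2 : ℝ) *
      ∫ ξ, Real.exp (-(Real.pi ^ 2 * c) * ‖ξ‖ ^ 2) * f ξ) atTop (𝓝 (f 0)) := by
  rw [← tendsto_ofReal_iff]
  refine (Real.tendsto_integral_gaussian_smul' (hf.ofReal (𝕜 := ℂ)) (v := 0)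
    (Complex.continuous_ofReal.continuousAt.comp h0)).congr' ?_
  filter_upwards [eventually_ge_atTop 0] with c hc
  rw [← integral_const_mul, ← integral_complex_ofReal]
  congr with ξ
  rw [zero_sub, norm_neg, Complex.ofReal_mul, Complex.ofReal_cpow (by positivity)]
  push_cast
  rw [smul_eq_mul, mul_assoc, neg_mul]
  rfl

lemma nonneg_of_isPSDKernel_spectralKernel (hf : Integrable f) (hK : IsPSDKernel (spectralKernel f))
    {v : E} (hv : ContinuousAt f v) : 0 ≤ f v := by
  wlog hv0 : v = 0 generalizing f v
  · have translate : spectralKernel (fun ξ => f (ξ + v)) = _ :=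
      funext₂ (spectralKernel_comp_add_right f v)
    have hKv : IsPSDKernel (spectralKernel fun ξ => f (ξ + v)) := translate ▸ hK.mul_conj _
    simpa using this (hf.comp_add_right v) hKv (v := 0)
      (ContinuousAt.comp (by simpa using hv) (by fun_prop)) rfl
  subst hv0
  refine ge_of_tendsto (tendsto_gaussian_mean hf hv) ?_
  filter_upwards [eventually_ge_atTop 0] with c hc
  exact mul_nonneg (by positivity)
    (integral_exp_neg_mul_sq_norm_mul_nonneg hf hK (by positivity))

lemma isPSDKernel_mul_spectralKernel_sub_iff (hf : Integrable f) (hg : Integrable g)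
    (hfc : Continuous f) (hgc : Continuous g) (l : ℝ) :
    IsPSDKernel (fun x y => l * spectralKernel f x y - spectralKernel g x y) ↔
      ∀ ξ, g ξ ≤ l * f ξ := by
  simp_rw [← spectralKernel_const_mul, ← spectralKernel_sub (hf.const_mul l) hg,
    ← sub_nonneg (b := g _)]
  have hint : Integrable fun ξ => l * f ξ - g ξ := (hf.const_mul l).sub hg
  exact ⟨fun hK ξ => nonneg_of_isPSDKernel_spectralKernel hint hK (by fun_prop),
    isPSDKernel_spectralKernel hint⟩

end SpectralKernel

section CauchySchlomilch

variable {G : Type*} [NormedAddCommGroup G] [NormedSpace ℝ G] {F : ℝ → G} {a : ℝ}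

lemma hasDerivAt_sub_div (a : ℝ) {u : ℝ} (hu : u ≠ 0) :
    HasDerivAt (fun u => u - a / u) (1 + a / u ^ 2) u := by
  refine ((hasDerivAt_id' u).fun_sub
    ((hasDerivAt_const u a).fun_div (hasDerivAt_id' u) hu)).congr_deriv ?_
  ring

lemma strictMonoOn_sub_div (ha : 0 ≤ a) : StrictMonoOn (fun u => u - a / u) (Set.Ioi 0) := by
  intro u (hu : 0 < u) v _ huv
  have : a / v ≤ a / u := div_le_div_of_nonneg_left ha hu huv.le
  dsimp only
  linarith

lemma image_sub_div_Ioi (ha : 0 < a) : (fun u => u - a / u) '' Set.Ioi 0 = Set.univ := by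
  refine Set.eq_univ_iff_forall.2 fun y => ?_
  have hroot : √(y ^ 2 + 4 * a) ^ 2 = y ^ 2 + 4 * a := Real.sq_sqrt (by positivity)
  have hlt : |y| < √(y ^ 2 + 4 * a) := Real.lt_sqrt_of_sq_lt (by rw [sq_abs]; linarith)
  have hpos : 0 < y + √(y ^ 2 + 4 * a) := by linarith [neg_abs_le y]
  refine ⟨(y + √(y ^ 2 + 4 * a)) / 2, half_pos hpos, ?_⟩
  field_simp
  linear_combination hroot

lemma abs_one_add_div_sq (ha : 0 ≤ a) (u : ℝ) : |1 + a / u ^ 2| = 1 + a / u ^ 2 :=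
  abs_of_nonneg (by positivity)

lemma integrableOn_one_add_div_sq_smul_comp_sub_div (ha : 0 < a) (hF : Integrable F) :
    IntegrableOn (fun u => (1 + a / u ^ 2) • F (u - a / u)) (Set.Ioi 0) := by
  have := (integrableOn_image_iff_integrableOn_abs_deriv_smul measurableSet_Ioi
    (fun u hu => (hasDerivAt_sub_div a (ne_of_gt hu)).hasDerivWithinAt)
    (strictMonoOn_sub_div ha.le).injOn F).1
  simp only [image_sub_div_Ioi ha, abs_one_add_div_sq ha.le] at this
  exact this hF.integrableOn

lemma integral_one_add_div_sq_smul_comp_sub_div (ha : 0 < a) (F : ℝ → G) :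
    ∫ u in Set.Ioi 0, (1 + a / u ^ 2) • F (u - a / u) = ∫ u, F u := by
  have := integral_image_eq_integral_abs_deriv_smul measurableSet_Ioi
    (fun u hu => (hasDerivAt_sub_div a (ne_of_gt hu)).hasDerivWithinAt)
    (strictMonoOn_sub_div ha.le).injOn F
  simpa only [image_sub_div_Ioi ha, abs_one_add_div_sq ha.le, setIntegral_univ] using this.symm

lemma integrableOn_comp_sub_div (ha : 0 < a) (hF : Integrable F) :
    IntegrableOn (fun u => F (u - a / u)) (Set.Ioi 0) := by
  have := (integrableOn_one_add_div_sq_smul_comp_sub_div ha hF).bdd_smul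
    (φ := fun u => (1 + a / u ^ 2)⁻¹) 1 (Measurable.aestronglyMeasurable (by fun_prop))
    (.of_forall fun u => ?_)
  · refine this.congr (.of_forall fun u => ?_)
    rw [Pi.smul_apply', smul_smul, inv_mul_cancel₀ (by positivity), one_smul]
  · rw [norm_inv, Real.norm_eq_abs, abs_one_add_div_sq ha.le]
    exact inv_le_one_of_one_le₀ (le_add_of_nonneg_right (by positivity))

lemma integral_Ioi_div_sq_smul_comp_div (ha : 0 < a) (h : ℝ → G) :
    ∫ u in Set.Ioi 0, (a / u ^ 2) • h (a / u) = ∫ u in Set.Ioi 0, h u := by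
  have scale := integral_comp_mul_left_Ioi h 0 ha
  rw [mul_zero, eq_inv_smul_iff₀ ha.ne', ← integral_comp_rpow_Ioi _ (neg_ne_zero.2 one_ne_zero),
    ← integral_smul] at scale
  rw [← scale]
  refine setIntegral_congr_fun measurableSet_Ioi fun u (hu : 0 < u) => ?_
  rw [smul_smul, Real.rpow_neg_one, show (-1 - 1 : ℝ) = -(2 : ℕ) by norm_num,
    Real.rpow_neg hu.le, Real.rpow_natCast, abs_neg, abs_one, one_mul, div_eq_mul_inv,
    div_eq_mul_inv]

theorem integral_Ioi_comp_sub_div_of_even (ha : 0 < a) (hF : Integrable F)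
    (heven : Function.Even F) :
    ∫ u in Set.Ioi 0, F (u - a / u) = (2⁻¹ : ℝ) • ∫ u, F u := by
  have inversion : ∫ u in Set.Ioi 0, (a / u ^ 2) • F (u - a / u) =
      ∫ u in Set.Ioi 0, F (u - a / u) := by
    rw [← integral_Ioi_div_sq_smul_comp_div ha fun u => F (u - a / u)]
    refine setIntegral_congr_fun measurableSet_Ioi fun u _ => ?_
    rw [div_div_cancel₀ ha.ne', ← heven, neg_sub]
  have hint := integrableOn_comp_sub_div ha hF
  have hint' : IntegrableOn (fun u => (a / u ^ 2) • F (u - a / u)) (Set.Ioi 0) := by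
    refine ((integrableOn_one_add_div_sq_smul_comp_sub_div ha hF).sub hint).congr
      (.of_forall fun u => ?_)
    rw [Pi.sub_apply, add_smul, one_smul, add_sub_cancel_left]
  rw [← integral_one_add_div_sq_smul_comp_sub_div ha F]
  simp_rw [add_smul, one_smul]
  rw [integral_add hint hint', inversion, ← two_smul ℝ, smul_smul]
  norm_num

end CauchySchlomilch

theorem integral_Ioi_rpow_mul_exp_neg_mul_exp_neg_sq_div {r : ℝ} (hr : 0 ≤ r) :
    ∫ s in Set.Ioi (0 : ℝ), s ^ (-(1 / 2) : ℝ) * Real.exp (-s) * Real.exp (-(r ^ 2 / (4 * s))) =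
      √Real.pi * Real.exp (-r) := by
  rcases hr.eq_or_lt with rfl | hr
  · rw [neg_zero, Real.exp_zero, mul_one, ← Real.Gamma_one_half_eq,
      Real.Gamma_eq_integral one_half_pos]
    congr with s
    norm_num [mul_comm]
  have gaussian : ∫ u in Set.Ioi (0 : ℝ), Real.exp (-(u - r / 2 / u) ^ 2) = 2⁻¹ * √Real.pi := by
    rw [integral_Ioi_comp_sub_div_of_even (F := fun u => Real.exp (-u ^ 2)) (half_pos hr)
      (by simpa using integrable_exp_neg_mul_sq one_pos) fun u => by simp only [neg_sq]]
    simpa using integral_gaussian 1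
  rw [← integral_comp_rpow_Ioi_of_pos (p := 2) two_pos]
  calc _ = ∫ u in Set.Ioi (0 : ℝ), 2 * Real.exp (-r) * Real.exp (-(u - r / 2 / u) ^ 2) := by
        refine setIntegral_congr_fun measurableSet_Ioi fun u (hu : 0 < u) => ?_
        have hexp : -u ^ 2 + -(r ^ 2 / (4 * u ^ 2)) = -r + -(u - r / 2 / u) ^ 2 := by
          field_simp
          ring
        have hsqrt : (u ^ 2) ^ (-(1 / 2) : ℝ) = u⁻¹ := by
          rw [← Real.rpow_natCast, ← Real.rpow_mul hu.le, ← Real.rpow_neg_one]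
          norm_num
        norm_num only [smul_eq_mul, Real.rpow_two, Real.rpow_one]
        rw [hsqrt, mul_assoc _ (Real.exp _), ← Real.exp_add, hexp, Real.exp_add]
        field_simp
    _ = √Real.pi * Real.exp (-r) := by
        rw [integral_const_mul, gaussian]
        ring

section CauchyDensity

variable {E : Type*} [NormedAddCommGroup E] [InnerProductSpace ℝ E] {σ : ℝ}

/-- The multivariate Cauchy density of scale `σ⁻¹`, with dimension `finrank ℝ E`: the spectral
density of the exponential kernel `exp (-‖x - y‖ / σ)`. -/
noncomputable def cauchyDensity (σ : ℝ) (ξ : E) : ℝ :=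
  σ ^ finrank ℝ E * Real.Gamma ((finrank ℝ E + 1) / 2) / Real.pi ^ ((finrank ℝ E + 1 : ℝ) / 2) /
    (1 + σ ^ 2 * ‖ξ‖ ^ 2) ^ ((finrank ℝ E + 1 : ℝ) / 2)

lemma cauchyDensity_pos (hσ : 0 < σ) (ξ : E) : 0 < cauchyDensity σ ξ := by
  unfold cauchyDensity
  positivity

lemma continuous_cauchyDensity (σ : ℝ) : Continuous (cauchyDensity σ : E → ℝ) :=
  continuous_const.div (.rpow_const (by fun_prop) fun ξ => .inr (by positivity))
    fun ξ => by positivity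

lemma sq_rpow_natCast_div_two {x : ℝ} (hx : 0 ≤ x) (n : ℕ) : (x ^ 2) ^ (n / 2 : ℝ) = x ^ n := by
  rw [← Real.rpow_natCast, ← Real.rpow_mul hx, Nat.cast_two, mul_div_cancel₀ _ two_ne_zero,
    Real.rpow_natCast]

lemma cauchyDensity_mul_norm_pow_le (hσ : 0 < σ) (ξ : E) :
    cauchyDensity σ ξ * ‖ξ‖ ^ (finrank ℝ E + 1) ≤
      Real.Gamma ((finrank ℝ E + 1) / 2) / (σ * Real.pi ^ ((finrank ℝ E + 1 : ℝ) / 2)) := by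
  have hpow : σ ^ (finrank ℝ E + 1) * ‖ξ‖ ^ (finrank ℝ E + 1) ≤
      (1 + σ ^ 2 * ‖ξ‖ ^ 2) ^ ((finrank ℝ E + 1 : ℝ) / 2) := by
    rw [← mul_pow, ← mul_pow, ← sq_rpow_natCast_div_two (by positivity)]
    push_cast
    gcongr
    exact le_add_of_nonneg_left zero_le_one
  rw [cauchyDensity, div_mul_eq_mul_div, div_le_iff₀ (by positivity)]
  calc _ = Real.Gamma ((finrank ℝ E + 1) / 2) / (σ * Real.pi ^ ((finrank ℝ E + 1 : ℝ) / 2)) *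
        (σ ^ (finrank ℝ E + 1) * ‖ξ‖ ^ (finrank ℝ E + 1)) := by
          rw [pow_succ σ]
          field_simp
    _ ≤ _ := by gcongr

/-- The integrand, in the variable `s`, of the Gamma integral for
`(1 + σ² ‖ξ‖²) ^ (-(n + 1) / 2)`, `n = finrank ℝ E`. Being Gaussian in `ξ`, it exhibits the Cauchy
density as a mixture of Gaussians. -/
noncomputable def gammaIntegrand (σ : ℝ) (ξ : E) (s : ℝ) : ℝ :=
  s ^ ((finrank ℝ E + 1 : ℝ) / 2 - 1) * Real.exp (-((1 + σ ^ 2 * ‖ξ‖ ^ 2) * s))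

lemma integral_gammaIntegrand (σ : ℝ) (ξ : E) :
    ∫ s in Set.Ioi 0, gammaIntegrand σ ξ s =
      Real.Gamma ((finrank ℝ E + 1) / 2) /
        (1 + σ ^ 2 * ‖ξ‖ ^ 2) ^ ((finrank ℝ E + 1 : ℝ) / 2) := by
  simp_rw [gammaIntegrand]
  rw [Real.integral_rpow_mul_exp_neg_mul_Ioi (by positivity) (by positivity),
    Real.div_rpow zero_le_one (by positivity), Real.one_rpow, one_div_mul_eq_div]

lemma cauchyDensity_eq_integral (σ : ℝ) (ξ : E) :
    cauchyDensity σ ξ = σ ^ finrank ℝ E / Real.pi ^ ((finrank ℝ E + 1 : ℝ) / 2) *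
      ∫ s in Set.Ioi 0, gammaIntegrand σ ξ s := by
  rw [integral_gammaIntegrand, cauchyDensity]
  ring

lemma integrableOn_gammaIntegrand (σ : ℝ) (ξ : E) :
    IntegrableOn (gammaIntegrand σ ξ) (Set.Ioi 0) :=
  .of_integral_ne_zero (by rw [integral_gammaIntegrand]; positivity)

variable [FiniteDimensional ℝ E] [MeasurableSpace E] [BorelSpace E]

lemma integrable_cauchyDensity (hσ : σ ≠ 0) : Integrable (cauchyDensity σ : E → ℝ) := by
  have japanese : Integrable fun ξ : E => (1 + ‖ξ‖ ^ 2) ^ (-(finrank ℝ E + 1 : ℝ) / 2) :=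
    integrable_rpow_neg_one_add_norm_sq (by linarith)
  convert (japanese.comp_smul hσ).const_mul (σ ^ finrank ℝ E *
    Real.Gamma ((finrank ℝ E + 1) / 2) / Real.pi ^ ((finrank ℝ E + 1 : ℝ) / 2)) using 2 with ξ
  rw [neg_div, Real.rpow_neg (by positivity), norm_smul, mul_pow, Real.norm_eq_abs, sq_abs,
    ← div_eq_mul_inv, cauchyDensity]

lemma integrable_gammaIntegrand_prod (hσ : σ ≠ 0) :
    Integrable (fun z : E × ℝ => gammaIntegrand σ z.1 z.2)
      (volume.prod (volume.restrict (Set.Ioi 0))) := by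
  have hmeas : Measurable fun z : E × ℝ => gammaIntegrand σ z.1 z.2 := by
    unfold gammaIntegrand
    fun_prop
  refine (integrable_prod_iff hmeas.aestronglyMeasurable).2
    ⟨.of_forall (integrableOn_gammaIntegrand σ), ?_⟩
  refine ((integrable_cauchyDensity hσ).const_mul
    (σ ^ finrank ℝ E / Real.pi ^ ((finrank ℝ E + 1 : ℝ) / 2))⁻¹).congr (.of_forall fun ξ => ?_)
  dsimp only
  rw [cauchyDensity_eq_integral, inv_mul_cancel_left₀ (by positivity)]
  refine setIntegral_congr_fun measurableSet_Ioi fun s (hs : 0 < s) => Eq.symm ?_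
  exact Real.norm_of_nonneg (by unfold gammaIntegrand; positivity)

lemma spectralKernel_gammaIntegrand {s : ℝ} (hσ : σ ≠ 0) (hs : 0 < s) (x y : E) :
    spectralKernel (gammaIntegrand σ · s) x y =
      (((Real.pi / σ ^ 2) ^ (finrank ℝ E / 2 : ℝ) * (s ^ (-(1 / 2) : ℝ) * Real.exp (-s) *
        Real.exp (-((‖x - y‖ / σ) ^ 2 / (4 * s)))) : ℝ) : ℂ) := by
  have factor (ξ : E) : gammaIntegrand σ ξ s =
      s ^ ((finrank ℝ E + 1 : ℝ) / 2 - 1) * Real.exp (-s) *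
        Real.exp (-(σ ^ 2 * s) * ‖ξ‖ ^ 2) := by
    rw [gammaIntegrand, mul_assoc, ← Real.exp_add]
    ring_nf
  simp_rw [factor]
  rw [spectralKernel_const_mul, spectralKernel_gaussian (by positivity), ← Complex.ofReal_mul]
  have hpow : (Real.pi / (σ ^ 2 * s)) ^ (finrank ℝ E / 2 : ℝ) *
      s ^ ((finrank ℝ E + 1 : ℝ) / 2 - 1) =
      (Real.pi / σ ^ 2) ^ (finrank ℝ E / 2 : ℝ) * s ^ (-(1 / 2) : ℝ) := by
    rw [← div_div, Real.div_rpow (by positivity) hs.le, div_mul_eq_mul_div, mul_div_assoc,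
      ← Real.rpow_sub hs]
    ring_nf
  have hexp : -‖x - y‖ ^ 2 / (4 * (σ ^ 2 * s)) = -((‖x - y‖ / σ) ^ 2 / (4 * s)) := by
    field_simp
  rw [hexp]
  congr 1
  linear_combination Real.exp (-s) * Real.exp (-((‖x - y‖ / σ) ^ 2 / (4 * s))) * hpow

theorem spectralKernel_cauchyDensity (hσ : 0 < σ) (x y : E) :
    spectralKernel (cauchyDensity σ) x y = (Real.exp (-‖x - y‖ / σ) : ℂ) := by
  have normalize : σ ^ finrank ℝ E / Real.pi ^ ((finrank ℝ E + 1 : ℝ) / 2) *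
      (Real.pi / σ ^ 2) ^ (finrank ℝ E / 2 : ℝ) * √Real.pi = 1 := by
    rw [Real.div_rpow Real.pi_nonneg (sq_nonneg σ), sq_rpow_natCast_div_two hσ.le, add_div,
      Real.rpow_add Real.pi_pos, Real.sqrt_eq_rpow]
    field_simp
  rw [funext (cauchyDensity_eq_integral σ), spectralKernel_const_mul,
    spectralKernel_integral (integrable_gammaIntegrand_prod hσ.ne'),
    setIntegral_congr_fun measurableSet_Ioi fun s hs => spectralKernel_gammaIntegrand hσ.ne' hs x y,
    integral_complex_ofReal, integral_const_mul,
    integral_Ioi_rpow_mul_exp_neg_mul_exp_neg_sq_div (by positivity), ← Complex.ofReal_mul,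
    neg_div]
  congr 1
  linear_combination Real.exp (-(‖x - y‖ / σ)) * normalize

end CauchyDensity

section Sinc

lemma mul_sinc (t : ℝ) : t * Real.sinc t = Real.sin t := by
  rcases eq_or_ne t 0 with rfl | ht
  · rw [zero_mul, Real.sin_zero]
  · rw [Real.sinc_of_ne_zero ht, mul_div_cancel₀ _ ht]

lemma integrable_sinc_pow {p : ℕ} (hp : 2 ≤ p) : Integrable fun t => Real.sinc t ^ p := by
  refine (integrable_inv_one_add_sq.const_mul 2).mono'
    (Real.continuous_sinc.pow p).aestronglyMeasurable (.of_forall fun t => ?_)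
  have hsq : Real.sinc t ^ 2 ≤ 1 := (sq_le_one_iff_abs_le_one _).2 (Real.abs_sinc_le_one t)
  have hpow : ‖Real.sinc t ^ p‖ ≤ Real.sinc t ^ 2 := by
    rw [norm_pow, Real.norm_eq_abs, ← sq_abs (Real.sinc t)]
    exact pow_le_pow_of_le_one (abs_nonneg _) (Real.abs_sinc_le_one t) hp
  refine hpow.trans ?_
  rw [← div_eq_mul_inv, le_div_iff₀ (by positivity)]
  linear_combination hsq + Real.sin_sq_le_one t + (Real.sinc t * t + Real.sin t) * mul_sinc t

variable {ι : Type*} [Fintype ι]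

lemma abs_prod_sinc_le (x : ι → ℝ) (j : ι) : |∏ i, Real.sinc (x i)| ≤ |Real.sinc (x j)| := by
  classical
  rw [← Finset.mul_prod_erase _ _ (Finset.mem_univ j), abs_mul, Finset.abs_prod]
  exact mul_le_of_le_one_right (abs_nonneg _)
    (Finset.prod_le_one (fun i _ => abs_nonneg _) fun i _ => Real.abs_sinc_le_one (x i))

lemma abs_prod_sinc_mul_max_one_norm_le_one (x : ι → ℝ) :
    |∏ i, Real.sinc (x i)| * max 1 ‖x‖ ≤ 1 := by
  rw [mul_max_of_nonneg _ _ (abs_nonneg _), mul_one, max_le_iff]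
  constructor
  · rw [Finset.abs_prod]
    exact Finset.prod_le_one (fun i _ => abs_nonneg _) fun i _ => Real.abs_sinc_le_one (x i)
  · rw [← Real.norm_eq_abs, ← norm_smul, pi_norm_le_iff_of_nonneg zero_le_one]
    intro j
    calc ‖(∏ i, Real.sinc (x i)) * x j‖ ≤ |Real.sinc (x j)| * |x j| := by
          rw [norm_mul, Real.norm_eq_abs, Real.norm_eq_abs]
          exact mul_le_mul_of_nonneg_right (abs_prod_sinc_le x j) (abs_nonneg _)
      _ ≤ 1 := by
          rw [← abs_mul, mul_comm, mul_sinc]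
          exact Real.abs_sin_le_one _

lemma abs_prod_sinc_pow_mul_max_one_norm_pow_le_one {m p : ℕ} (hmp : m ≤ p) (x : ι → ℝ) :
    |∏ i, Real.sinc (x i)| ^ p * max 1 ‖x‖ ^ m ≤ 1 :=
  calc |∏ i, Real.sinc (x i)| ^ p * max 1 ‖x‖ ^ m
      ≤ |∏ i, Real.sinc (x i)| ^ p * max 1 ‖x‖ ^ p := by
        gcongr
        exact le_max_left _ _
    _ ≤ 1 := by
        rw [← mul_pow]
        exact pow_le_one₀ (by positivity) (abs_prod_sinc_mul_max_one_norm_le_one x)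

end Sinc

section BSpline

variable {d p : ℕ}

lemma bsplineDensity_eq_prod_sinc (d p : ℕ) (ξ : EuclideanSpace ℝ (Fin d)) :
    bsplineDensity d p ξ = (2 * Real.pi) ^ (-(d : ℤ)) * (∏ j, Real.sinc (ξ j / 2)) ^ p := by
  simp only [bsplineDensity, Real.sinc_apply, Finset.prod_pow, div_eq_zero_iff, OfNat.ofNat_ne_zero,
    or_false]

lemma continuous_bsplineDensity (d p : ℕ) : Continuous (bsplineDensity d p) := by
  have := Real.continuous_sinc
  simp_rw [funext (bsplineDensity_eq_prod_sinc d p)]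
  fun_prop

lemma integrable_bsplineDensity (d : ℕ) (hp : 2 ≤ p) : Integrable (bsplineDensity d p) := by
  simp_rw [funext (bsplineDensity_eq_prod_sinc d p), ← Finset.prod_pow]
  refine Integrable.const_mul ?_ _
  rw [← (PiLp.volume_preserving_toLp (Fin d)).integrable_comp_emb
    (MeasurableEquiv.toLp 2 (Fin d → ℝ)).measurableEmbedding]
  exact .fintype_prod (f := fun _ t => Real.sinc (t / 2) ^ p)
    fun _ => (integrable_sinc_pow hp).comp_div two_ne_zero

lemma bsplineDensity_single (p : ℕ) (j : Fin d) (t : ℝ) :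
    bsplineDensity d p (EuclideanSpace.single j t) =
      (2 * Real.pi) ^ (-(d : ℤ)) * Real.sinc (t / 2) ^ p := by
  rw [bsplineDensity_eq_prod_sinc, Finset.prod_eq_single j]
  · rw [PiLp.single_apply, if_pos rfl]
  · intro i _ hij
    simp [hij]
  · simp

lemma exists_bsplineDensity_eq_zero (hd : 0 < d) (hp : p ≠ 0) : ∃ ξ, bsplineDensity d p ξ = 0 := by
  refine ⟨EuclideanSpace.single ⟨0, hd⟩ (2 * Real.pi), ?_⟩
  rw [bsplineDensity_single, mul_div_cancel_left₀ _ two_ne_zero,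
    Real.sinc_of_ne_zero Real.pi_ne_zero, Real.sin_pi, zero_div, zero_pow hp, mul_zero]

lemma bsplineDensity_single_mul_pow (p : ℕ) (j : Fin d) (n : ℕ) :
    bsplineDensity d p (EuclideanSpace.single j ((4 * n + 1) * Real.pi)) *
      ((4 * n + 1) * Real.pi) ^ p = (2 * Real.pi) ^ (-(d : ℤ)) * 2 ^ p := by
  have hsin : Real.sin ((4 * n + 1) * Real.pi / 2) = 1 := by
    rw [show (4 * n + 1) * Real.pi / 2 = Real.pi / 2 + n * (2 * Real.pi) by ring,
      Real.sin_add_nat_mul_two_pi, Real.sin_pi_div_two]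
  rw [bsplineDensity_single, mul_assoc, ← mul_pow]
  congr 2
  linear_combination 2 * (mul_sinc ((4 * n + 1) * Real.pi / 2)).trans hsin

lemma norm_sq_le_card_mul_norm_ofLp_sq {ι : Type*} [Fintype ι] (ξ : EuclideanSpace ℝ ι) :
    ‖ξ‖ ^ 2 ≤ Fintype.card ι * ‖WithLp.ofLp ξ‖ ^ 2 := by
  rw [EuclideanSpace.norm_sq_eq, ← nsmul_eq_mul]
  refine Finset.sum_le_card_nsmul _ _ _ fun i _ => ?_
  gcongr
  exact norm_le_pi_norm (WithLp.ofLp ξ) i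

lemma one_add_sq_mul_norm_sq_le (σ : ℝ) (ξ : EuclideanSpace ℝ (Fin d)) :
    1 + σ ^ 2 * ‖ξ‖ ^ 2 ≤ (2 * max 1 ‖fun j => ξ j / 2‖) ^ 2 * (1 + σ ^ 2 * d) := by
  set N := max 1 ‖fun j => ξ j / 2‖
  have hN : 1 ≤ (2 * N) ^ 2 := one_le_pow₀ (by linarith [le_max_left 1 ‖fun j => ξ j / 2‖])
  have hcoord : ‖WithLp.ofLp ξ‖ ≤ 2 * N := by
    have hhalf : WithLp.ofLp ξ = (2 : ℝ) • fun j => ξ j / 2 := by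
      ext j
      exact (mul_div_cancel₀ _ two_ne_zero).symm
    rw [hhalf, norm_smul, Real.norm_two]
    gcongr
    exact le_max_right _ _
  calc 1 + σ ^ 2 * ‖ξ‖ ^ 2 ≤ 1 + σ ^ 2 * (d * ‖WithLp.ofLp ξ‖ ^ 2) := by
        gcongr
        simpa using norm_sq_le_card_mul_norm_ofLp_sq ξ
    _ ≤ (2 * N) ^ 2 + σ ^ 2 * (d * (2 * N) ^ 2) := by gcongr
    _ = (2 * N) ^ 2 * (1 + σ ^ 2 * d) := by ring

theorem abs_prod_sinc_pow_mul_rpow_le (hdp : d + 1 ≤ p) (σ : ℝ) (ξ : EuclideanSpace ℝ (Fin d)) :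
    |∏ j, Real.sinc (ξ j / 2)| ^ p * (1 + σ ^ 2 * ‖ξ‖ ^ 2) ^ ((d + 1 : ℝ) / 2) ≤
      2 ^ p * (1 + σ ^ 2 * d) ^ ((d + 1 : ℝ) / 2) := by
  set N := max 1 ‖fun j => ξ j / 2‖
  set P := |∏ j, Real.sinc (ξ j / 2)|
  have hN : 0 ≤ N := zero_le_one.trans (le_max_left _ _)
  calc P ^ p * (1 + σ ^ 2 * ‖ξ‖ ^ 2) ^ ((d + 1 : ℝ) / 2)
      ≤ P ^ p * ((2 * N) ^ 2 * (1 + σ ^ 2 * d)) ^ ((d + 1 : ℝ) / 2) := by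
        gcongr
        exact one_add_sq_mul_norm_sq_le σ ξ
    _ = 2 ^ (d + 1) * (P ^ p * N ^ (d + 1)) * (1 + σ ^ 2 * d) ^ ((d + 1 : ℝ) / 2) := by
        rw [Real.mul_rpow (by positivity) (by positivity), ← Nat.cast_add_one,
          sq_rpow_natCast_div_two (mul_nonneg zero_le_two hN)]
        ring
    _ ≤ 2 ^ p * 1 * (1 + σ ^ 2 * d) ^ ((d + 1 : ℝ) / 2) := by
        gcongr
        · exact one_le_two
        · exact abs_prod_sinc_pow_mul_max_one_norm_pow_le_one hdp _
    _ = _ := by rw [mul_one]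

theorem bsplineDensity_le_mul_cauchyDensity (hdp : d + 1 ≤ p) {σ : ℝ} (hσ : 0 < σ)
    (ξ : EuclideanSpace ℝ (Fin d)) :
    bsplineDensity d p ξ ≤ (2 : ℝ) ^ (p - d) / (σ ^ d * Real.pi ^ (((d : ℝ) - 1) / 2)) *
      ((1 + σ ^ 2 * d) ^ (((d : ℝ) + 1) / 2) / Real.Gamma (((d : ℝ) + 1) / 2)) *
        cauchyDensity σ ξ := by
  have hpi : Real.pi ^ (((d : ℝ) + 1) / 2) = Real.pi ^ d / Real.pi ^ (((d : ℝ) - 1) / 2) := by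
    rw [← Real.rpow_natCast, ← Real.rpow_sub Real.pi_pos]
    ring_nf
  calc bsplineDensity d p ξ
      ≤ (2 * Real.pi) ^ (-(d : ℤ)) * |∏ j, Real.sinc (ξ j / 2)| ^ p := by
        rw [bsplineDensity_eq_prod_sinc, ← abs_pow]
        gcongr
        exact le_abs_self _
    _ ≤ (2 * Real.pi) ^ (-(d : ℤ)) * (2 ^ p * (1 + σ ^ 2 * d) ^ ((d + 1 : ℝ) / 2) /
          (1 + σ ^ 2 * ‖ξ‖ ^ 2) ^ ((d + 1 : ℝ) / 2)) := by
        gcongr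
        rw [le_div_iff₀ (by positivity)]
        exact abs_prod_sinc_pow_mul_rpow_le hdp σ ξ
    _ = _ := by
        rw [cauchyDensity, finrank_euclideanSpace_fin, hpi, zpow_neg, zpow_natCast, mul_pow,
          ← pow_sub_mul_pow (2 : ℝ) (show d ≤ p by omega)]
        field_simp

theorem add_one_le_of_bsplineDensity_le_mul_cauchyDensity (hd : 0 < d) {σ lam : ℝ} (hσ : 0 < σ)
    (hlam : 0 ≤ lam)
    (h : ∀ ξ : EuclideanSpace ℝ (Fin d), bsplineDensity d p ξ ≤ lam * cauchyDensity σ ξ) :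
    d + 1 ≤ p := by
  by_contra! hpd
  set B := Real.Gamma ((d + 1) / 2) / (σ * Real.pi ^ ((d + 1 : ℝ) / 2))
  have hb : 0 < (2 * Real.pi) ^ (-(d : ℤ)) * 2 ^ p := by positivity
  obtain ⟨n, hn⟩ := exists_nat_gt (lam * B / ((2 * Real.pi) ^ (-(d : ℤ)) * 2 ^ p))
  rw [div_lt_iff₀' hb] at hn
  set t : ℝ := (4 * n + 1) * Real.pi
  let ξ : EuclideanSpace ℝ (Fin d) := EuclideanSpace.single ⟨0, hd⟩ t
  have hnt : (n : ℝ) ≤ t := by nlinarith [Real.pi_gt_three]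
  have ht : 1 ≤ t := by nlinarith [Real.pi_gt_three]
  have hξ : ‖ξ‖ = t := by
    rw [PiLp.norm_single, Real.norm_of_nonneg (by positivity)]
  have hdecay : cauchyDensity σ ξ * t ^ (d + 1) ≤ B := by
    simpa only [finrank_euclideanSpace_fin, hξ] using cauchyDensity_mul_norm_pow_le hσ ξ
  refine hn.not_ge ?_
  calc (2 * Real.pi) ^ (-(d : ℤ)) * 2 ^ p * n
      ≤ (2 * Real.pi) ^ (-(d : ℤ)) * 2 ^ p * t ^ (d + 1 - p) := by
        gcongr
        exact hnt.trans (le_self_pow₀ ht (by omega))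
    _ = bsplineDensity d p ξ * t ^ (d + 1) := by
        rw [← bsplineDensity_single_mul_pow p ⟨0, hd⟩ n, mul_assoc, ← pow_add,
          Nat.add_sub_cancel' hpd.le]
    _ ≤ lam * cauchyDensity σ ξ * t ^ (d + 1) := by
        gcongr
        exact h ξ
    _ ≤ lam * B := by
        rw [mul_assoc]
        gcongr

end BSpline

section Kernels

variable {d p : ℕ} {σ : ℝ}

lemma bsplineK_eq_spectralKernel (d p : ℕ) : bsplineK d p = spectralKernel (bsplineDensity d p) :=
  rfl

lemma l2expK_eq_spectralKernel (d : ℕ) (hσ : 0 < σ) :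
    l2expK d σ = spectralKernel (cauchyDensity σ) :=
  funext₂ fun x y => (spectralKernel_cauchyDensity hσ x y).symm

lemma isPSDKernel_mul_bsplineK_sub_l2expK_iff (d : ℕ) (hp : 2 ≤ p) (hσ : 0 < σ) (lam : ℝ) :
    IsPSDKernel (fun x y => lam * bsplineK d p x y - l2expK d σ x y) ↔
      ∀ ξ, cauchyDensity σ ξ ≤ lam * bsplineDensity d p ξ := by
  rw [bsplineK_eq_spectralKernel, l2expK_eq_spectralKernel d hσ]
  exact isPSDKernel_mul_spectralKernel_sub_iff (integrable_bsplineDensity d hp)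
    (integrable_cauchyDensity hσ.ne') (continuous_bsplineDensity d p) (continuous_cauchyDensity σ)
    lam

lemma isPSDKernel_mul_l2expK_sub_bsplineK_iff (d : ℕ) (hp : 2 ≤ p) (hσ : 0 < σ) (lam : ℝ) :
    IsPSDKernel (fun x y => lam * l2expK d σ x y - bsplineK d p x y) ↔
      ∀ ξ, bsplineDensity d p ξ ≤ lam * cauchyDensity σ ξ := by
  rw [bsplineK_eq_spectralKernel, l2expK_eq_spectralKernel d hσ]
  exact isPSDKernel_mul_spectralKernel_sub_iff (integrable_cauchyDensity hσ.ne')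
    (integrable_bsplineDensity d hp) (continuous_cauchyDensity σ) (continuous_bsplineDensity d p)
    lam

end Kernels

theorem bspline_l2exp_inclusion_general (d p : ℕ) (hd : 0 < d) (hp : 2 ≤ p) (σ : ℝ) (hσ : 0 < σ) :
    (¬ ∃ lam : ℝ, 0 ≤ lam ∧
        IsPSDKernel (fun x y : EuclideanSpace ℝ (Fin d) =>
          (lam : ℂ) * bsplineK d p x y - l2expK d σ x y)) ∧
    ((∃ lam : ℝ, 0 ≤ lam ∧
        IsPSDKernel (fun x y : EuclideanSpace ℝ (Fin d) =>
          (lam : ℂ) * l2expK d σ x y - bsplineK d p x y)) ↔ d + 1 ≤ p) ∧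
    (d + 1 ≤ p →
      sInf {lam : ℝ | 0 ≤ lam ∧
          IsPSDKernel (fun x y : EuclideanSpace ℝ (Fin d) =>
            (lam : ℂ) * l2expK d σ x y - bsplineK d p x y)}
        ≤ (2 : ℝ) ^ (p - d) / (σ ^ d * Real.pi ^ (((d : ℝ) - 1) / 2)) *
            ((1 + σ ^ 2 * d) ^ (((d : ℝ) + 1) / 2) / Real.Gamma (((d : ℝ) + 1) / 2))) := by
  simp_rw [isPSDKernel_mul_bsplineK_sub_l2expK_iff d hp hσ,
    isPSDKernel_mul_l2expK_sub_bsplineK_iff d hp hσ]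
  refine ⟨?_, ⟨?_, fun hdp => ⟨_, by positivity, bsplineDensity_le_mul_cauchyDensity hdp hσ⟩⟩,
    fun hdp => csInf_le ⟨0, fun lam hlam => hlam.1⟩
      ⟨by positivity, bsplineDensity_le_mul_cauchyDensity hdp hσ⟩⟩
  · rintro ⟨lam, -, h⟩
    obtain ⟨ξ, hξ⟩ := exists_bsplineDensity_eq_zero hd (p := p) (by omega)
    exact (cauchyDensity_pos hσ ξ).not_ge (by simpa [hξ] using h ξ)
  · rintro ⟨lam, hlam, h⟩
    exact add_one_le_of_bsplineDensity_le_mul_cauchyDensity hd hσ hlam h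

/-- (a) No `λ ≥ 0` makes `λB_p − ℰ_σ` positive semidefinite; (b) some `λ ≥ 0` makes
`λℰ_σ − B_p` positive semidefinite iff `p ≥ d + 1`; (c) if `p ≥ d + 1` the least
such `λ` is at most `2^{p−d} (1+σ²d)^{(d+1)/2} / (σ^d π^{(d−1)/2} Γ((d+1)/2))`. -/
theorem bspline_l2exp_inclusion (d p : ℕ) (hd : 0 < d) (hp : Even p) (hp0 : 0 < p)
    (σ : ℝ) (hσ : 0 < σ) :
    (¬ ∃ lam : ℝ, 0 ≤ lam ∧
        IsPSDKernel (fun x y : EuclideanSpace ℝ (Fin d) =>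
          (lam : ℂ) * bsplineK d p x y - l2expK d σ x y)) ∧
    ((∃ lam : ℝ, 0 ≤ lam ∧
        IsPSDKernel (fun x y : EuclideanSpace ℝ (Fin d) =>
          (lam : ℂ) * l2expK d σ x y - bsplineK d p x y)) ↔ d + 1 ≤ p) ∧
    (d + 1 ≤ p →
      sInf {lam : ℝ | 0 ≤ lam ∧
          IsPSDKernel (fun x y : EuclideanSpace ℝ (Fin d) =>
            (lam : ℂ) * l2expK d σ x y - bsplineK d p x y)}
        ≤ (2 : ℝ) ^ (p - d) / (σ ^ d * Real.pi ^ (((d : ℝ) - 1) / 2)) *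
            ((1 + σ ^ 2 * d) ^ (((d : ℝ) + 1) / 2) / Real.Gamma (((d : ℝ) + 1) / 2))) := by
  obtain ⟨k, rfl⟩ := hp
  exact bspline_l2exp_inclusion_general d _ hd (by omega) σ hσ
end
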